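/- arXiv:0711.3258 — 3 statements merged into one kernel-verified Lean document; each statement's English description precedes it below -/
import Mathlib

section
/- (Existence of the asymptotic time-shift r₋ with rate.) Let K ⊆ U be compact, T₀ ∈ ℝ, c₀, C₀ > 0, and let (r(t),θ(t),ρ(t),ω(t)) : (−∞,T₀] → (1,∞)×K×ℝ×ℝ^{n-1} be a solution of the Hamiltonian system satisfying r(t) ≥ c₀(1+|t|), |ρ(t)| ≤ C₀ and |ω(t)| ≤ C₀ for all t ≤ T₀. Then there exists C > 0 such that |d/dt (r(t) − 2tρ(t))| ≤ C(1+|t|)^{-1-μ} for t ≤ T₀; consequently the limit r₋ := lim_{t→−∞}(r(t) − 2tρ(t)) exists and satisfies |r₋ − (r(t) − 2tρ(t))| ≤ C'(1+|t|)^{-μ} for all t ≤ T₀. -/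
open Real Set Filter Topology

namespace Scattering

/-- The Euclidean norm of a vector in `Fin m → ℝ`. -/
noncomputable def eNorm {m : ℕ} (v : Fin m → ℝ) : ℝ := Real.sqrt (∑ j, v j ^ 2)

/-- Partial derivative in the radial variable of a function of `(r, θ)`. -/
noncomputable def pderivR {m : ℕ} (f : ℝ → (Fin m → ℝ) → ℝ) : ℝ → (Fin m → ℝ) → ℝ :=
  fun r θ => deriv (fun s => f s θ) r

/-- Partial derivative in the `j`-th angular variable of a function of `(r, θ)`. -/
noncomputable def pderivTheta {m : ℕ} (j : Fin m) (f : ℝ → (Fin m → ℝ) → ℝ) :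
    ℝ → (Fin m → ℝ) → ℝ :=
  fun r θ => fderiv ℝ (f r) θ (Pi.single j 1)

/-- Iterated angular derivatives `∂_θ^α` for a multi-index `α` (a list of directions). -/
noncomputable def thetaDerivs {m : ℕ} (α : List (Fin m)) (f : ℝ → (Fin m → ℝ) → ℝ) :
    ℝ → (Fin m → ℝ) → ℝ :=
  α.foldr pderivTheta f

/-- `DecayOn f ν S K` : for all `k, α` there is `C > 0` with
`|∂_r^k ∂_θ^α f(r,θ)| ≤ C r^{-ν-k}` for `r ∈ (S,∞)`, `θ ∈ K`. -/
def DecayOn {m : ℕ} (f : ℝ → (Fin m → ℝ) → ℝ) (ν S : ℝ) (K : Set (Fin m → ℝ)) : Prop :=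
  ∀ (k : ℕ) (α : List (Fin m)), ∃ C > 0, ∀ r ∈ Ioi S, ∀ θ ∈ K,
    |(pderivR (m := m))^[k] (thetaDerivs α f) r θ| ≤ C * r ^ (-ν - (k : ℝ))

/-- The classical kinetic energy function
`p(r,θ,ρ,ω) = ρ² + r⁻²Σ h^{jk} ω_j ω_k + a₀ ρ² + r⁻¹ Σ a₁^j ρ ω_j + r⁻² Σ a₂^{jk} ω_j ω_k`. -/
noncomputable def energy {m : ℕ} (hM : (Fin m → ℝ) → Matrix (Fin m) (Fin m) ℝ)
    (a0 : ℝ → (Fin m → ℝ) → ℝ) (a1 : ℝ → (Fin m → ℝ) → Fin m → ℝ)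
    (a2 : ℝ → (Fin m → ℝ) → Matrix (Fin m) (Fin m) ℝ) :
    ℝ → (Fin m → ℝ) → ℝ → (Fin m → ℝ) → ℝ :=
  fun r θ ρ ω =>
    ρ ^ 2 + (∑ j, ∑ k, hM θ j k * ω j * ω k) / r ^ 2 + a0 r θ * ρ ^ 2
      + (∑ j, a1 r θ j * ρ * ω j) / r + (∑ j, ∑ k, a2 r θ j k * ω j * ω k) / r ^ 2

section PhaseDerivs

variable {m : ℕ} (p : ℝ → (Fin m → ℝ) → ℝ → (Fin m → ℝ) → ℝ)

/-- `∂p/∂r`. -/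
noncomputable def pdR (r : ℝ) (θ : Fin m → ℝ) (ρ : ℝ) (ω : Fin m → ℝ) : ℝ :=
  deriv (fun s => p s θ ρ ω) r

/-- `∂p/∂θ_j`. -/
noncomputable def pdTheta (j : Fin m) (r : ℝ) (θ : Fin m → ℝ) (ρ : ℝ) (ω : Fin m → ℝ) : ℝ :=
  fderiv ℝ (fun θ' => p r θ' ρ ω) θ (Pi.single j 1)

/-- `∂p/∂ρ`. -/
noncomputable def pdRho (r : ℝ) (θ : Fin m → ℝ) (ρ : ℝ) (ω : Fin m → ℝ) : ℝ :=
  deriv (fun s => p r θ s ω) ρ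

/-- `∂p/∂ω_j`. -/
noncomputable def pdOmega (j : Fin m) (r : ℝ) (θ : Fin m → ℝ) (ρ : ℝ) (ω : Fin m → ℝ) : ℝ :=
  fderiv ℝ (fun ω' => p r θ ρ ω') ω (Pi.single j 1)

/-- `(r,θ,ρ,ω)` solves the Hamiltonian system
`ṙ = ∂p/∂ρ, θ̇ = ∂p/∂ω, ρ̇ = -∂p/∂r, ω̇ = -∂p/∂θ` on the set `I` of times. -/
def IsHamSolOn (r : ℝ → ℝ) (θ : ℝ → Fin m → ℝ) (ρ : ℝ → ℝ) (ω : ℝ → Fin m → ℝ)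
    (I : Set ℝ) : Prop :=
  ∀ t ∈ I,
    HasDerivAt r (pdRho p (r t) (θ t) (ρ t) (ω t)) t ∧
    (∀ j, HasDerivAt (fun s => θ s j) (pdOmega p j (r t) (θ t) (ρ t) (ω t)) t) ∧
    HasDerivAt ρ (-pdR p (r t) (θ t) (ρ t) (ω t)) t ∧
    (∀ j, HasDerivAt (fun s => ω s j) (-pdTheta p j (r t) (θ t) (ρ t) (ω t)) t)

/-- The interaction-picture (time-dependent) Hamiltonian `K(t,R,θ,ρ,ω) = ρ² - p(R+2tρ,θ,ρ,ω)`. -/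
noncomputable def Kint (t R : ℝ) (θ : Fin m → ℝ) (ρ : ℝ) (ω : Fin m → ℝ) : ℝ :=
  ρ ^ 2 - p (R + 2 * t * ρ) θ ρ ω

/-- `∂K/∂R`. -/
noncomputable def KdR (t R : ℝ) (θ : Fin m → ℝ) (ρ : ℝ) (ω : Fin m → ℝ) : ℝ :=
  deriv (fun x => Kint p t x θ ρ ω) R

/-- `∂K/∂θ_j`. -/
noncomputable def KdTheta (j : Fin m) (t R : ℝ) (θ : Fin m → ℝ) (ρ : ℝ) (ω : Fin m → ℝ) : ℝ :=
  fderiv ℝ (fun θ' => Kint p t R θ' ρ ω) θ (Pi.single j 1)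

/-- `∂K/∂ρ`. -/
noncomputable def KdRho (t R : ℝ) (θ : Fin m → ℝ) (ρ : ℝ) (ω : Fin m → ℝ) : ℝ :=
  deriv (fun x => Kint p t R θ x ω) ρ

/-- `∂K/∂ω_j`. -/
noncomputable def KdOmega (j : Fin m) (t R : ℝ) (θ : Fin m → ℝ) (ρ : ℝ) (ω : Fin m → ℝ) : ℝ :=
  fderiv ℝ (fun ω' => Kint p t R θ ρ ω') ω (Pi.single j 1)

end PhaseDerivs

/-- The phase space `ℝ × ℝ^m × ℝ × ℝ^m` with coordinates `(R, θ, ρ, ω)`. -/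
abbrev Phase (m : ℕ) : Type := ℝ × (Fin m → ℝ) × ℝ × (Fin m → ℝ)

/-- A curve `f = (R,θ,ρ,ω)` solves the interaction-picture Hamiltonian system
`Ṙ = ∂K/∂ρ, θ̇ = ∂K/∂ω, ρ̇ = -∂K/∂R, ω̇ = -∂K/∂θ` on the set `I` of times. -/
def IsIntSolOn {m : ℕ} (p : ℝ → (Fin m → ℝ) → ℝ → (Fin m → ℝ) → ℝ)
    (f : ℝ → Phase m) (I : Set ℝ) : Prop :=
  ∀ t ∈ I,
    HasDerivAt (fun s => (f s).1) (KdRho p t (f t).1 (f t).2.1 (f t).2.2.1 (f t).2.2.2) t ∧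
    (∀ j, HasDerivAt (fun s => (f s).2.1 j)
      (KdOmega p j t (f t).1 (f t).2.1 (f t).2.2.1 (f t).2.2.2) t) ∧
    HasDerivAt (fun s => (f s).2.2.1)
      (-(KdR p t (f t).1 (f t).2.1 (f t).2.2.1 (f t).2.2.2)) t ∧
    (∀ j, HasDerivAt (fun s => (f s).2.2.2 j)
      (-(KdTheta p j t (f t).1 (f t).2.1 (f t).2.2.1 (f t).2.2.2)) t)

/-- The data of a scattering metric of short-range type on the end `(1,∞) × U`:
the boundary metric `h` (smooth, symmetric, positive definite) and the coefficients
`a₀, a₁, a₂` of the kinetic energy, smooth on `(1,∞) × U` with the short-range decay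
`|∂_r^k ∂_θ^α a₀| ≤ C r^{-1-μ-k}`, `|∂_r^k ∂_θ^α a₁| ≤ C r^{-μ-k}`,
`|∂_r^k ∂_θ^α a₂| ≤ C r^{-μ-k}` on `(1,∞) × K` for every compact `K ⊆ U`. -/
structure Coeffs (m : ℕ) (μ : ℝ) (U : Set (Fin m → ℝ)) where
  hM : (Fin m → ℝ) → Matrix (Fin m) (Fin m) ℝ
  a0 : ℝ → (Fin m → ℝ) → ℝ
  a1 : ℝ → (Fin m → ℝ) → Fin m → ℝ
  a2 : ℝ → (Fin m → ℝ) → Matrix (Fin m) (Fin m) ℝ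
  hM_smooth : ∀ j k, ContDiffOn ℝ (⊤ : ℕ∞) (fun θ => hM θ j k) U
  hM_symm : ∀ θ ∈ U, (hM θ).IsSymm
  hM_posdef : ∀ θ ∈ U, (hM θ).PosDef
  a0_smooth : ContDiffOn ℝ (⊤ : ℕ∞) (fun z : ℝ × (Fin m → ℝ) => a0 z.1 z.2) (Ioi (1:ℝ) ×ˢ U)
  a1_smooth : ∀ j, ContDiffOn ℝ (⊤ : ℕ∞) (fun z : ℝ × (Fin m → ℝ) => a1 z.1 z.2 j) (Ioi (1:ℝ) ×ˢ U)
  a2_smooth : ∀ j k, ContDiffOn ℝ (⊤ : ℕ∞) (fun z : ℝ × (Fin m → ℝ) => a2 z.1 z.2 j k) (Ioi (1:ℝ) ×ˢ U)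
  a2_symm : ∀ r θ j k, a2 r θ j k = a2 r θ k j
  a0_decay : ∀ K : Set (Fin m → ℝ), IsCompact K → K ⊆ U → DecayOn a0 (1 + μ) 1 K
  a1_decay : ∀ K : Set (Fin m → ℝ), IsCompact K → K ⊆ U →
    ∀ j, DecayOn (fun r θ => a1 r θ j) μ 1 K
  a2_decay : ∀ K : Set (Fin m → ℝ), IsCompact K → K ⊆ U →
    ∀ j k, DecayOn (fun r θ => a2 r θ j k) μ 1 K

/-- The kinetic energy function associated to the data `c`. -/
noncomputable def Coeffs.p {m : ℕ} {μ : ℝ} {U : Set (Fin m → ℝ)} (c : Coeffs m μ U) :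
    ℝ → (Fin m → ℝ) → ℝ → (Fin m → ℝ) → ℝ :=
  energy c.hM c.a0 c.a1 c.a2


lemma sum_bound {ι X : Type*} [Fintype ι] (f : ι → X → ℝ) (g : X → ℝ) (P : X → Prop)
    (hg : ∀ x, P x → 0 ≤ g x)
    (h : ∀ i, ∃ C > 0, ∀ x, P x → |f i x| ≤ C * g x) (D : ℝ) (hD : 0 < D) :
    ∃ C > 0, ∀ x, P x → ∀ w : ι → ℝ, (∀ i, |w i| ≤ D) → |∑ i, f i x * w i| ≤ C * g x := by
  choose C hC hf using h
  refine ⟨(∑ i, C i * D) + 1, by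
    have := Finset.sum_nonneg (fun i (_ : i ∈ Finset.univ) => (mul_pos (hC i) hD).le)
    linarith, fun x hx w hw => ?_⟩
  calc |∑ i, f i x * w i| ≤ ∑ i, |f i x * w i| := Finset.abs_sum_le_sum_abs _ _
    _ ≤ ∑ i, (C i * D) * g x := by
        refine Finset.sum_le_sum fun i _ => ?_
        rw [abs_mul]
        calc |f i x| * |w i| ≤ (C i * g x) * D :=
              mul_le_mul (hf i x hx) (hw i) (abs_nonneg _) (mul_nonneg (hC i).le (hg x hx))
          _ = _ := by ring
    _ = (∑ i, C i * D) * g x := by rw [Finset.sum_mul]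
    _ ≤ _ := by nlinarith [hg x hx]

lemma abs_le_eNorm {m : ℕ} (v : Fin m → ℝ) (j : Fin m) : |v j| ≤ eNorm v := by
  unfold eNorm
  apply Real.abs_le_sqrt
  exact Finset.single_le_sum (f := fun j => v j ^ 2) (fun i _ => sq_nonneg _) (Finset.mem_univ j)

lemma radial_hasDerivAt {m : ℕ} {U : Set (Fin m → ℝ)} (hU : IsOpen U)
    (f : ℝ → (Fin m → ℝ) → ℝ)
    (hf : ContDiffOn ℝ (⊤ : ℕ∞) (fun z : ℝ × (Fin m → ℝ) => f z.1 z.2) (Ioi (1:ℝ) ×ˢ U))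
    {x : ℝ} (hx : 1 < x) {y : Fin m → ℝ} (hy : y ∈ U) :
    HasDerivAt (fun s => f s y) (pderivR f x y) x := by
  have h1 : DifferentiableAt ℝ (fun z : ℝ × (Fin m → ℝ) => f z.1 z.2) (x, y) :=
    (hf.contDiffAt ((isOpen_Ioi.prod hU).mem_nhds (show (x, y) ∈ Ioi (1:ℝ) ×ˢ U from ⟨hx, hy⟩))).differentiableAt (by simp)
  have h2 : DifferentiableAt ℝ (fun s : ℝ => (s, y)) x := by fun_prop
  have h3 : DifferentiableAt ℝ (fun s : ℝ => f s y) x :=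
    DifferentiableAt.comp (f := fun s : ℝ => (s, y)) x h1 h2
  exact h3.hasDerivAt

lemma limit_of_deriv {μ : ℝ} (hμ : 0 < μ) (T₀ C : ℝ) (hC : 0 < C) (g : ℝ → ℝ)
    (hg : ∀ t ≤ T₀, ∃ d : ℝ, HasDerivAt g d t ∧ |d| ≤ C * (1 + |t|) ^ (-(1:ℝ) - μ)) :
    ∃ rm : ℝ, Tendsto g atBot (𝓝 rm) ∧
        ∃ C' > (0:ℝ), ∀ t ≤ T₀, |rm - g t| ≤ C' * (1 + |t|) ^ (-μ) := by
  set T₁ := min T₀ 0 with hT₁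
  let G : ℝ → ℝ := fun t => C / μ * (1 - t) ^ (-μ)
  have hG : ∀ t ≤ (0:ℝ), HasDerivAt G (C * (1 + |t|) ^ (-(1:ℝ) - μ)) t := by
    intro t ht
    have h1 : HasDerivAt (fun t : ℝ => 1 - t) (-1) t := by
      simpa using (hasDerivAt_id t).const_sub 1
    have h2 := (h1.rpow_const (p := -μ) (Or.inl (by linarith))).const_mul (C / μ)
    refine h2.congr_deriv ?_
    rw [abs_of_nonpos ht, show -(1:ℝ) - μ = -μ - 1 by ring, ← sub_eq_add_neg]
    field_simp
  have hGpos : ∀ t ≤ (0:ℝ), 0 ≤ G t := fun t ht =>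
    mul_nonneg (div_pos hC hμ).le (Real.rpow_nonneg (by linarith) _)
  have hGlim : Tendsto G atBot (𝓝 0) := by
    have h1 : Tendsto (fun t : ℝ => 1 - t) atBot atTop := by
      simpa [sub_eq_add_neg] using tendsto_atTop_add_const_left atBot (1:ℝ) tendsto_neg_atBot_atTop
    have := ((tendsto_rpow_neg_atTop hμ).comp h1).const_mul (C / μ)
    simpa [G, Function.comp_def] using this
  have hT1 : T₁ ≤ T₀ := min_le_left _ _
  have hT2 : T₁ ≤ 0 := min_le_right _ _
  choose! d hd hdb using hg
  have mono : ∀ σ : ℝ, |σ| = 1 → MonotoneOn (fun t => G t + σ * g t) (Iic T₁) := by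
    intro σ hσ
    have hder : ∀ t ≤ T₁, HasDerivAt (fun t => G t + σ * g t)
        (C * (1 + |t|) ^ (-(1:ℝ) - μ) + σ * d t) t := fun t ht =>
      (hG t (ht.trans hT2)).add ((hd t (ht.trans hT1)).const_mul σ)
    refine monotoneOn_of_deriv_nonneg (convex_Iic _)
      (fun t ht => (hder t ht).continuousAt.continuousWithinAt)
      (fun t ht => ?_) (fun t ht => ?_)
    · have ht' : t ∈ Iic T₁ := interior_subset ht
      exact (hder t ht').differentiableAt.differentiableWithinAt
    · have ht' : t ∈ Iic T₁ := interior_subset ht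
      rw [(hder t ht').deriv]
      have h1 := hdb t (le_trans ht' hT1)
      have h2 : |σ * d t| = |d t| := by rw [abs_mul, hσ, one_mul]
      have := neg_abs_le (σ * d t)
      linarith
  have key : ∀ s t, s ≤ t → t ≤ T₁ → |g s - g t| ≤ G t - G s := by
    intro s t hst ht
    have h1 := mono 1 (by simp) (hst.trans ht : s ∈ Iic T₁) (ht : t ∈ Iic T₁) hst
    have h2 := mono (-1) (by simp) (hst.trans ht : s ∈ Iic T₁) (ht : t ∈ Iic T₁) hst
    simp only at h1 h2
    rw [abs_le]; constructor <;> linarith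
  -- the limit
  obtain ⟨rm, hrm⟩ : ∃ rm, Tendsto g atBot (𝓝 rm) := by
    have hmono : Monotone (fun t => G (min t T₁) + 1 * g (min t T₁)) := fun s t hst =>
      mono 1 (by simp) (mem_Iic.2 (min_le_right _ _)) (mem_Iic.2 (min_le_right _ _)) (min_le_min_right _ hst)
    have hbdd : BddBelow (range (fun t => G (min t T₁) + 1 * g (min t T₁))) := by
      refine ⟨g T₁ - G T₁, ?_⟩
      rintro _ ⟨t, rfl⟩
      have h1 := key (min t T₁) T₁ (min_le_right _ _) le_rfl
      have h2 := hGpos (min t T₁) ((min_le_right _ _).trans hT2)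
      have := (abs_le.1 h1).1
      simp only
      linarith
    have h1 := tendsto_atBot_ciInf hmono hbdd
    refine ⟨_, ((h1.sub hGlim).congr' ?_)⟩
    filter_upwards [eventually_le_atBot T₁] with t ht
    rw [min_eq_left ht]; ring
  have hrate : ∀ t ≤ T₁, |rm - g t| ≤ G t := by
    intro t ht
    refine le_of_tendsto ((hrm.sub_const (g t)).abs) ?_
    filter_upwards [eventually_le_atBot t] with s hs
    have := key s t hs ht
    have := hGpos s (hs.trans (ht.trans hT2))
    linarith
  have hcont : ContinuousOn (fun t => (rm - g t) * (1 + |t|) ^ μ) (Icc T₁ T₀) := by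
    intro t ht
    refine ContinuousAt.continuousWithinAt ?_
    refine (continuousAt_const.sub (hd t ht.2).continuousAt).mul ?_
    exact ContinuousAt.rpow_const (by fun_prop) (Or.inr hμ.le)
  obtain ⟨M, hM⟩ := isCompact_Icc.exists_bound_of_continuousOn hcont
  refine ⟨rm, hrm, C / μ + |M|, by positivity, fun t ht => ?_⟩
  have hp : 0 < (1 + |t|) ^ (-μ) := by positivity
  rcases le_total t T₁ with h | h
  · have h1 := hrate t h
    have h0 : t ≤ 0 := h.trans hT2
    have : G t = C / μ * (1 + |t|) ^ (-μ) := by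
      simp only [G]; rw [abs_of_nonpos h0, ← sub_eq_add_neg]
    nlinarith [abs_nonneg M]
  · have h1 := hM t ⟨h, ht⟩
    rw [Real.norm_eq_abs, abs_mul, abs_of_pos (by positivity : 0 < (1 + |t|) ^ μ)] at h1
    have h2 : |rm - g t| = (|rm - g t| * (1 + |t|) ^ μ) * (1 + |t|) ^ (-μ) := by
      rw [mul_assoc, ← Real.rpow_add (by positivity)]; simp
    rw [h2]
    have h3 : 0 < C / μ := by positivity
    have h4 := le_abs_self M
    exact mul_le_mul_of_nonneg_right (by linarith) hp.le

lemma alg_bound {q R t c₀ C₀ a0 da0 S1 dS1 S2 dS2 H ρ A A' B1 B1' B2 B2' B3 : ℝ}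
    (hq : 0 < q) (hR : 1 < R) (hRq : 1 / R ≤ q) (hc₀ : 0 < c₀) (hC₀ : 0 < C₀)
    (hA : 0 < A) (hA' : 0 < A') (hB1 : 0 < B1) (hB1' : 0 < B1') (hB2 : 0 < B2) (hB2' : 0 < B2')
    (hB3 : 0 < B3)
    (ht : |t| ≤ R / c₀) (hρ : |ρ| ≤ C₀) (h0 : |a0| ≤ A * (q / R)) (h0' : |da0| ≤ A' * (q / R ^ 2))
    (h1 : |S1| ≤ B1 * q) (h1' : |dS1| ≤ B1' * (q / R)) (h2 : |S2| ≤ B2 * q)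
    (h2' : |dS2| ≤ B2' * (q / R)) (h3 : |H| ≤ B3) :
    |2 * a0 * ρ + S1 / R + 2 * t * (-2 * H / R ^ 3 + da0 * ρ ^ 2 + ρ * dS1 / R - ρ * S1 / R ^ 2
      + dS2 / R ^ 2 - 2 * S2 / R ^ 3)| ≤
    (2 * A * C₀ + B1 + 2 / c₀ * (2 * B3 + A' * C₀ ^ 2 + C₀ * B1' + C₀ * B1 + B2' + 2 * B2))
      * (q / R) := by
  have hR0 : 0 < R := by linarith
  have e1 : |2 * a0 * ρ| ≤ 2 * (A * (q / R)) * C₀ := by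
    rw [abs_mul, abs_mul, abs_two]; gcongr
  have e2 : |S1 / R| ≤ B1 * q / R := by
    rw [abs_div, abs_of_pos hR0]; gcongr
  have f1 : |-2 * H / R ^ 3| ≤ 2 * B3 * (q / R ^ 2) := by
    rw [abs_div, abs_mul, abs_neg, abs_two, abs_of_pos (by positivity : 0 < R ^ 3)]
    calc 2 * |H| / R ^ 3 ≤ 2 * B3 / R ^ 3 := by gcongr
      _ = 2 * B3 * ((1 / R) / R ^ 2) := by field_simp
      _ ≤ _ := by gcongr
  have f2 : |da0 * ρ ^ 2| ≤ A' * (q / R ^ 2) * C₀ ^ 2 := by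
    rw [abs_mul, abs_pow]; gcongr
  have f3 : |ρ * dS1 / R| ≤ C₀ * (B1' * (q / R)) / R := by
    rw [abs_div, abs_mul, abs_of_pos hR0]; gcongr
  have f4 : |ρ * S1 / R ^ 2| ≤ C₀ * (B1 * q) / R ^ 2 := by
    rw [abs_div, abs_mul, abs_of_pos (by positivity : 0 < R ^ 2)]; gcongr
  have f5 : |dS2 / R ^ 2| ≤ B2' * (q / R ^ 2) := by
    rw [abs_div, abs_of_pos (by positivity : 0 < R ^ 2)]
    calc |dS2| / R ^ 2 ≤ B2' * (q / R) / R ^ 2 := by gcongr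
      _ ≤ B2' * (q / 1) / R ^ 2 := by gcongr
      _ = _ := by field_simp
  have f6 : |2 * S2 / R ^ 3| ≤ 2 * B2 * (q / R ^ 2) := by
    rw [abs_div, abs_mul, abs_two, abs_of_pos (by positivity : 0 < R ^ 3)]
    calc 2 * |S2| / R ^ 3 ≤ 2 * (B2 * q) / R ^ 3 := by gcongr
      _ ≤ 2 * (B2 * q) / R ^ 2 := by gcongr <;> linarith
      _ = _ := by field_simp
  have e3 : |2 * t * (-2 * H / R ^ 3 + da0 * ρ ^ 2 + ρ * dS1 / R - ρ * S1 / R ^ 2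
      + dS2 / R ^ 2 - 2 * S2 / R ^ 3)| ≤ 2 * (R / c₀) * (2 * B3 * (q / R ^ 2) +
      A' * (q / R ^ 2) * C₀ ^ 2 + C₀ * (B1' * (q / R)) / R + C₀ * (B1 * q) / R ^ 2
      + B2' * (q / R ^ 2) + 2 * B2 * (q / R ^ 2)) := by
    rw [abs_mul, abs_mul, abs_two]
    have := abs_le.1 f1
    have := abs_le.1 f2
    have := abs_le.1 f3
    have := abs_le.1 f4
    have := abs_le.1 f5
    have := abs_le.1 f6
    have hh : |-2 * H / R ^ 3 + da0 * ρ ^ 2 + ρ * dS1 / R - ρ * S1 / R ^ 2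
      + dS2 / R ^ 2 - 2 * S2 / R ^ 3| ≤ 2 * B3 * (q / R ^ 2) +
      A' * (q / R ^ 2) * C₀ ^ 2 + C₀ * (B1' * (q / R)) / R + C₀ * (B1 * q) / R ^ 2
      + B2' * (q / R ^ 2) + 2 * B2 * (q / R ^ 2) := by
      rw [abs_le]; constructor <;> linarith
    gcongr
  refine (abs_add_three _ _ _).trans ((add_le_add (add_le_add e1 e2) e3).trans (le_of_eq ?_))
  field_simp

lemma pdRho_eq {m : ℕ} {μ : ℝ} {U : Set (Fin m → ℝ)} (c : Coeffs m μ U)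
    (R : ℝ) (y : Fin m → ℝ) (ρ : ℝ) (ω : Fin m → ℝ) :
    pdRho c.p R y ρ ω = 2 * ρ + 2 * c.a0 R y * ρ + (∑ j, c.a1 R y j * ω j) / R := by
  unfold pdRho Coeffs.p energy
  have e : ∀ s : ℝ, ∑ j, c.a1 R y j * s * ω j = s * ∑ j, c.a1 R y j * ω j := by
    intro s; rw [Finset.mul_sum]; exact Finset.sum_congr rfl fun j _ => by ring
  simp only [e]
  apply HasDerivAt.deriv
  have h1 : HasDerivAt (fun s : ℝ => s ^ 2) (2 * ρ) ρ := by simpa using hasDerivAt_pow 2 ρ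
  have h2 := (((h1.add_const ((∑ j, ∑ k, c.hM y j k * ω j * ω k) / R ^ 2)).add
    (h1.const_mul (c.a0 R y))).add
    (((hasDerivAt_id ρ).mul_const (∑ j, c.a1 R y j * ω j)).div_const R)).add_const
      ((∑ j, ∑ k, c.a2 R y j k * ω j * ω k) / R ^ 2)
  refine HasDerivAt.congr_deriv h2 ?_
  ring

lemma pdR_eq {m : ℕ} {μ : ℝ} {U : Set (Fin m → ℝ)} (hU : IsOpen U) (c : Coeffs m μ U)
    {R : ℝ} (hR : 1 < R) {y : Fin m → ℝ} (hy : y ∈ U) (ρ : ℝ) (ω : Fin m → ℝ) :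
    pdR c.p R y ρ ω = -2 * (∑ i : Fin m × Fin m, c.hM y i.1 i.2 * (ω i.1 * ω i.2)) / R ^ 3
      + pderivR c.a0 R y * ρ ^ 2
      + ρ * (∑ j, pderivR (fun r θ => c.a1 r θ j) R y * ω j) / R
      - ρ * (∑ j, c.a1 R y j * ω j) / R ^ 2
      + (∑ i : Fin m × Fin m, pderivR (fun r θ => c.a2 r θ i.1 i.2) R y * (ω i.1 * ω i.2)) / R ^ 2
      - 2 * (∑ i : Fin m × Fin m, c.a2 R y i.1 i.2 * (ω i.1 * ω i.2)) / R ^ 3 := by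
  unfold pdR Coeffs.p energy
  have e : ∀ s : ℝ, ∑ j, c.a1 s y j * ρ * ω j = ρ * ∑ j, c.a1 s y j * ω j := by
    intro s; rw [Finset.mul_sum]; exact Finset.sum_congr rfl fun j _ => by ring
  have e2 : ∀ M : Matrix (Fin m) (Fin m) ℝ, ∑ j, ∑ k, M j k * ω j * ω k
      = ∑ i : Fin m × Fin m, M i.1 i.2 * (ω i.1 * ω i.2) := by
    intro M; rw [Fintype.sum_prod_type]
    exact Finset.sum_congr rfl fun j _ => Finset.sum_congr rfl fun k _ => by ring
  simp only [e, e2]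
  apply HasDerivAt.deriv
  have hR0 : R ≠ 0 := by linarith
  have hp : HasDerivAt (fun s : ℝ => s ^ 2) (2 * R) R := by simpa using hasDerivAt_pow 2 R
  have d0 := radial_hasDerivAt hU _ c.a0_smooth hR hy
  have d1 : HasDerivAt (fun s => ∑ j, c.a1 s y j * ω j)
      (∑ j, pderivR (fun r θ => c.a1 r θ j) R y * ω j) R :=
    HasDerivAt.fun_sum fun j _ =>
      (radial_hasDerivAt hU (fun r θ => c.a1 r θ j) (c.a1_smooth j) hR hy).mul_const (ω j)
  have d2 : HasDerivAt (fun s => ∑ i : Fin m × Fin m, c.a2 s y i.1 i.2 * (ω i.1 * ω i.2))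
      (∑ i : Fin m × Fin m, pderivR (fun r θ => c.a2 r θ i.1 i.2) R y * (ω i.1 * ω i.2)) R :=
    HasDerivAt.fun_sum fun i _ =>
      (radial_hasDerivAt hU (fun r θ => c.a2 r θ i.1 i.2) (c.a2_smooth i.1 i.2) hR hy).mul_const _
  have hR2 : R ^ 2 ≠ 0 := pow_ne_zero _ hR0
  have h2 := ((((((hasDerivAt_const R (∑ i : Fin m × Fin m, c.hM y i.1 i.2 * (ω i.1 * ω i.2))).div
    hp hR2).const_add (ρ ^ 2)).add (d0.mul_const (ρ ^ 2))).add
    ((d1.const_mul ρ).div (hasDerivAt_id R) hR0))).add (d2.div hp hR2)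
  refine HasDerivAt.congr_deriv h2 ?_
  simp only [id]
  field_simp
  ring

/-- Existence of the asymptotic time-shift `r₋` with rate. Along a
backward trajectory with linear escape and bounded `ρ, ω`, the derivative of
`r(t) - 2tρ(t)` is `O(⟨t⟩^{-1-μ})`; hence the limit `r₋` exists with rate `⟨t⟩^{-μ}`. -/
theorem statement_7 {m : ℕ} (hm : 1 ≤ m) {μ : ℝ} (hμ : μ ∈ Ioo (0:ℝ) 1)
    {U : Set (Fin m → ℝ)} (hU : IsOpen U) (c : Coeffs m μ U)
    (K : Set (Fin m → ℝ)) (hK : IsCompact K) (hKU : K ⊆ U) (T₀ : ℝ)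
    (c₀ C₀ : ℝ) (hc₀ : 0 < c₀) (hC₀ : 0 < C₀)
    (r : ℝ → ℝ) (θ : ℝ → Fin m → ℝ) (ρ : ℝ → ℝ) (ω : ℝ → Fin m → ℝ)
    (hsol : IsHamSolOn c.p r θ ρ ω (Iic T₀))
    (hdom : ∀ t ≤ T₀, r t ∈ Ioi (1:ℝ) ∧ θ t ∈ K ∧ r t ≥ c₀ * (1 + |t|) ∧
      |ρ t| ≤ C₀ ∧ eNorm (ω t) ≤ C₀) :
    ∃ C > (0:ℝ),
      (∀ t ≤ T₀, ∃ d : ℝ, HasDerivAt (fun s => r s - 2 * s * ρ s) d t ∧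
        |d| ≤ C * (1 + |t|) ^ (-(1:ℝ) - μ)) ∧
      (∃ rm : ℝ, Tendsto (fun t => r t - 2 * t * ρ t) atBot (𝓝 rm) ∧
        ∃ C' > (0:ℝ), ∀ t ≤ T₀, |rm - (r t - 2 * t * ρ t)| ≤ C' * (1 + |t|) ^ (-μ)) := by
  obtain ⟨hμ0, hμ1⟩ := hμ
  let P : ℝ × (Fin m → ℝ) → Prop := fun z => 1 < z.1 ∧ z.2 ∈ K
  have hq : ∀ R : ℝ, 1 < R → 0 < R ^ (-μ) := fun R hR => Real.rpow_pos_of_pos (by linarith) _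
  have r1 : ∀ R : ℝ, 1 < R → R ^ (-μ - 1) = R ^ (-μ) / R := fun R hR => by
    rw [Real.rpow_sub_one (by linarith)]
  have r2 : ∀ R : ℝ, 1 < R → R ^ (-(1 + μ)) = R ^ (-μ) / R := fun R hR => by
    rw [← r1 R hR]; congr 1; ring
  have r3 : ∀ R : ℝ, 1 < R → R ^ (-(1 + μ) - 1) = R ^ (-μ) / R ^ 2 := fun R hR => by
    rw [Real.rpow_sub_one (by linarith), r2 R hR, div_div, sq]
  obtain ⟨A, hA, h0⟩ := c.a0_decay K hK hKU 0 []
  obtain ⟨A', hA', h0'⟩ := c.a0_decay K hK hKU 1 []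
  have nn : ∀ z, P z → 0 ≤ z.1 ^ (-μ) := fun z hz => (hq _ hz.1).le
  have nn' : ∀ z, P z → 0 ≤ z.1 ^ (-μ) / z.1 := fun z hz =>
    div_nonneg (hq _ hz.1).le (by linarith [hz.1])
  obtain ⟨B1, hB1, h1⟩ := sum_bound (fun (j : Fin m) (z : ℝ × (Fin m → ℝ)) => c.a1 z.1 z.2 j)
    (fun z => z.1 ^ (-μ)) P nn (fun j => by
      obtain ⟨C, hC, h⟩ := c.a1_decay K hK hKU j 0 []
      refine ⟨C, hC, fun z hz => ?_⟩
      simpa [thetaDerivs] using h z.1 hz.1 z.2 hz.2) C₀ hC₀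
  obtain ⟨B1', hB1', h1'⟩ := sum_bound (fun (j : Fin m) (z : ℝ × (Fin m → ℝ)) =>
      pderivR (fun r θ => c.a1 r θ j) z.1 z.2)
    (fun z => z.1 ^ (-μ) / z.1) P nn' (fun j => by
      obtain ⟨C, hC, h⟩ := c.a1_decay K hK hKU j 1 []
      refine ⟨C, hC, fun z hz => ?_⟩
      have := h z.1 hz.1 z.2 hz.2
      rw [Nat.cast_one, r1 _ hz.1] at this
      simpa [thetaDerivs] using this) C₀ hC₀
  obtain ⟨B2, hB2, h2⟩ := sum_bound (fun (i : Fin m × Fin m) (z : ℝ × (Fin m → ℝ)) =>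
      c.a2 z.1 z.2 i.1 i.2)
    (fun z => z.1 ^ (-μ)) P nn (fun i => by
      obtain ⟨C, hC, h⟩ := c.a2_decay K hK hKU i.1 i.2 0 []
      refine ⟨C, hC, fun z hz => ?_⟩
      simpa [thetaDerivs] using h z.1 hz.1 z.2 hz.2) (C₀ * C₀) (by positivity)
  obtain ⟨B2', hB2', h2'⟩ := sum_bound (fun (i : Fin m × Fin m) (z : ℝ × (Fin m → ℝ)) =>
      pderivR (fun r θ => c.a2 r θ i.1 i.2) z.1 z.2)
    (fun z => z.1 ^ (-μ) / z.1) P nn' (fun i => by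
      obtain ⟨C, hC, h⟩ := c.a2_decay K hK hKU i.1 i.2 1 []
      refine ⟨C, hC, fun z hz => ?_⟩
      have := h z.1 hz.1 z.2 hz.2
      rw [Nat.cast_one, r1 _ hz.1] at this
      simpa [thetaDerivs] using this) (C₀ * C₀) (by positivity)
  obtain ⟨B3, hB3, h3⟩ := sum_bound (fun (i : Fin m × Fin m) (z : ℝ × (Fin m → ℝ)) =>
      c.hM z.2 i.1 i.2)
    (fun z => 1) P (fun _ _ => zero_le_one) (fun i => by
      obtain ⟨C, hC⟩ := hK.exists_bound_of_continuousOn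
        ((c.hM_smooth i.1 i.2).continuousOn.mono hKU)
      refine ⟨|C| + 1, by positivity, fun z hz => ?_⟩
      have := hC z.2 hz.2
      rw [Real.norm_eq_abs] at this
      linarith [le_abs_self C]) (C₀ * C₀) (by positivity)
  set D := 2 * A * C₀ + B1 + 2 / c₀ * (2 * B3 + A' * C₀ ^ 2 + C₀ * B1' + C₀ * B1 + B2' + 2 * B2)
    with hD
  have hDpos : 0 < D := by positivity
  have hder : ∀ t ≤ T₀, ∃ d : ℝ, HasDerivAt (fun s => r s - 2 * s * ρ s) d t ∧
        |d| ≤ (D * c₀ ^ (-(1:ℝ) - μ)) * (1 + |t|) ^ (-(1:ℝ) - μ) := by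
    intro t ht
    obtain ⟨hr, hθ, hrt, hρ, hω⟩ := hdom t ht
    obtain ⟨dr, -, dρ, -⟩ := hsol t ht
    have hr1 : 1 < r t := hr
    have hPz : P (r t, θ t) := ⟨hr, hθ⟩
    have hωj : ∀ j, |ω t j| ≤ C₀ := fun j => (abs_le_eNorm _ j).trans hω
    have hωjk : ∀ i : Fin m × Fin m, |ω t i.1 * ω t i.2| ≤ C₀ * C₀ := fun i => by
      rw [abs_mul]; exact mul_le_mul (hωj _) (hωj _) (abs_nonneg _) hC₀.le
    refine ⟨_, dr.sub (((hasDerivAt_id t).const_mul 2).mul dρ), ?_⟩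
    rw [pdRho_eq, pdR_eq hU c hr1 (hKU hθ)]
    have hb0 := h0 (r t) hr (θ t) hθ
    have hb0' := h0' (r t) hr (θ t) hθ
    rw [Nat.cast_one, r3 _ hr1] at hb0'
    rw [Nat.cast_zero, sub_zero, r2 _ hr1] at hb0
    have htb : |t| ≤ r t / c₀ := by
      rw [le_div_iff₀ hc₀]; nlinarith
    have hRq : 1 / r t ≤ r t ^ (-μ) := by
      rw [one_div, ← Real.rpow_neg_one]
      exact Real.rpow_le_rpow_of_exponent_le hr1.le (by linarith)
    have main := alg_bound (hq _ hr1) hr1 hRq hc₀ hC₀ hA hA' hB1 hB1' hB2 hB2' hB3 htb hρ hb0 hb0'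
      (h1 _ hPz _ hωj) (h1' _ hPz _ hωj) (h2 _ hPz _ hωjk) (h2' _ hPz _ hωjk)
      ((h3 _ hPz _ hωjk).trans (mul_one _).le)
    have hfin : r t ^ (-μ) / r t ≤ c₀ ^ (-(1:ℝ) - μ) * (1 + |t|) ^ (-(1:ℝ) - μ) := by
      rw [← Real.mul_rpow hc₀.le (by positivity), ← r2 _ hr1, show -(1 + μ) = -(1:ℝ) - μ by ring]
      exact Real.rpow_le_rpow_of_nonpos (by positivity) hrt (by linarith)
    have := mul_le_mul_of_nonneg_left hfin hDpos.le
    rw [mul_assoc D]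
    refine le_trans (le_of_eq ?_) (main.trans this)
    congr 1
    simp only [thetaDerivs, List.foldr, Function.iterate_zero, Function.iterate_one, id]
    ring
  have hCpos : 0 < D * c₀ ^ (-(1:ℝ) - μ) := by positivity
  exact ⟨_, hCpos, hder, limit_of_deriv hμ0 T₀ _ hCpos _ hder⟩

end Scattering
end

section
/- (Existence of scattering data θ₋, ρ⁻, ω⁻ with rates.) Let K ⊆ U be compact, T₀ ∈ ℝ, c₀, C₀ > 0, and let (r(t),θ(t),ρ(t),ω(t)) : (−∞,T₀] → (1,∞)×K×ℝ×ℝ^{n-1} be a solution of the Hamiltonian system satisfying r(t) ≥ c₀(1+|t|), |ρ(t)| ≤ C₀ and |ω(t)| ≤ C₀ for all t ≤ T₀. Then the limits θ₋ := lim_{t→−∞}θ(t), ρ⁻ := lim_{t→−∞}ρ(t), ω⁻ := lim_{t→−∞}ω(t) exist, and there is C > 0 such that for all t ≤ T₀: |θ₋ − θ(t)| ≤ C(1+|t|)^{-μ}, |ρ⁻ − ρ(t)| ≤ C(1+|t|)^{-1-μ}, and |ω⁻ − ω(t)| ≤ C(1+|t|)^{-μ}. -/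
open Real Set Filter Topology

namespace Scattering

/-! Helper lemmas. -/

lemma limit_aux (T₀ A ν : ℝ) (hν : 0 < ν) (f f' : ℝ → ℝ)
    (hf : ∀ t ≤ T₀, HasDerivAt f (f' t) t)
    (hb : ∀ t ≤ T₀, |f' t| ≤ A * (1 + |t|) ^ (-(1 + ν))) :
    ∃ L C : ℝ, 0 ≤ C ∧ Tendsto f atBot (𝓝 L) ∧ ∀ t ≤ T₀, |L - f t| ≤ C * (1 + |t|) ^ (-ν) := by
  have hA : 0 ≤ A := by
    have h1 := (abs_nonneg _).trans (hb T₀ le_rfl)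
    have h2 : 0 < (1 + |T₀|) ^ (-(1 + ν)) := by positivity
    exact nonneg_of_mul_nonneg_left h1 h2
  set T := max T₀ 0 with hT
  have hT0 : 0 ≤ T := le_max_right _ _
  have hTT : T₀ ≤ T := le_max_left _ _
  have hs : ∀ t ≤ T₀, 1 ≤ 1 + T - t := fun t ht => by linarith
  have hs1 : ∀ t ≤ T₀, 1 + T - t ≤ (1 + T) * (1 + |t|) := fun t ht => by
    nlinarith [neg_abs_le t, mul_nonneg hT0 (abs_nonneg t)]
  have hs2 : ∀ t ≤ T₀, 1 + |t| ≤ (1 + T) * (1 + T - t) := fun t ht => by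
    have : |t| ≤ 2 * T - t := by
      rw [abs_le]; constructor <;> linarith
    rcases le_total 0 t with h | h
    · rw [abs_of_nonneg h]; nlinarith [mul_nonneg hT0 (sub_nonneg.2 (ht.trans hTT))]
    · rw [abs_of_nonpos h]; nlinarith [mul_nonneg hT0 (sub_nonneg.2 (ht.trans hTT))]
  set A' := A * (1 + T) ^ (1 + ν) with hA'
  have hA'0 : 0 ≤ A' := by positivity
  have hb' : ∀ t ≤ T₀, |f' t| ≤ A' * (1 + T - t) ^ (-(1 + ν)) := fun t ht => by
    refine (hb t ht).trans ?_
    rw [hA', mul_assoc]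
    refine mul_le_mul_of_nonneg_left ?_ hA
    have p1 : 0 < 1 + T - t := by linarith [hs t ht]
    rw [Real.rpow_neg (by positivity), Real.rpow_neg p1.le, ← div_eq_mul_inv,
      inv_eq_one_div, div_le_div_iff₀ (by positivity) (by positivity), one_mul,
      ← Real.mul_rpow (by positivity) (by positivity)]
    exact Real.rpow_le_rpow p1.le (hs1 t ht) (by linarith)
  set B : ℝ → ℝ := fun t => A' / ν * (1 + T - t) ^ (-ν) with hB
  have hB0 : ∀ t ≤ T₀, 0 ≤ B t := fun t ht => by
    have := hs t ht
    have p1 : 0 ≤ 1 + T - t := by linarith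
    simp only [hB]; positivity
  have hBd : ∀ t ≤ T₀, HasDerivAt B (A' * (1 + T - t) ^ (-(1 + ν))) t := fun t ht => by
    have p1 : 0 < 1 + T - t := by linarith [hs t ht]
    have h := (((hasDerivAt_id t).const_sub (1 + T)).rpow_const (p := -ν) (Or.inl p1.ne')).const_mul (A' / ν)
    refine h.congr_deriv ?_
    simp only [id]
    rw [show -ν - 1 = -(1 + ν) by ring]
    field_simp
  have hint : ∀ t ∈ interior (Iic T₀), t ≤ T₀ := fun t ht => by
    have h : t ∈ Iic T₀ := interior_subset ht
    exact h
  have hmono : MonotoneOn (fun t => f t + B t) (Iic T₀) := by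
    refine monotoneOn_of_hasDerivWithinAt_nonneg (convex_Iic _)
      (f' := fun t => f' t + A' * (1 + T - t) ^ (-(1 + ν)))
      (fun t ht => ((hf t ht).add (hBd t ht)).continuousAt.continuousWithinAt)
      (fun t ht => ((hf t (hint t ht)).add (hBd t (hint t ht))).hasDerivWithinAt) ?_
    intro t ht
    have := (abs_le.1 (hb' t (hint t ht))).1
    linarith
  have hanti : AntitoneOn (fun t => f t - B t) (Iic T₀) := by
    refine antitoneOn_of_hasDerivWithinAt_nonpos (convex_Iic _)
      (f' := fun t => f' t - A' * (1 + T - t) ^ (-(1 + ν)))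
      (fun t ht => ((hf t ht).sub (hBd t ht)).continuousAt.continuousWithinAt)
      (fun t ht => ((hf t (hint t ht)).sub (hBd t (hint t ht))).hasDerivWithinAt) ?_
    intro t ht
    have := (abs_le.1 (hb' t (hint t ht))).2
    linarith
  have hBlim : Tendsto B atBot (𝓝 0) := by
    have h1 : Tendsto (fun t : ℝ => 1 + T - t) atBot atTop :=
      tendsto_atTop_add_const_left _ _ tendsto_neg_atBot_atTop
    have := ((tendsto_rpow_neg_atTop hν).comp h1).const_mul (A' / ν)
    simpa [hB, Function.comp_def] using this
  set g : ℝ → ℝ := fun t => f (min t T₀) + B (min t T₀) with hg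
  have hgm : Monotone g := fun s t hst =>
    hmono (mem_Iic.2 (min_le_right s T₀)) (mem_Iic.2 (min_le_right t T₀))
      (min_le_min_right _ hst)
  have hgb : BddBelow (range g) := by
    refine ⟨f T₀ - B T₀, ?_⟩
    rintro _ ⟨t, rfl⟩
    have h1 := hanti (mem_Iic.2 (min_le_right t T₀)) (mem_Iic.2 le_rfl) (min_le_right t T₀)
    have h2 := hB0 _ (min_le_right t T₀)
    simp only [hg] at *
    linarith
  have hgl := tendsto_atBot_ciInf hgm hgb
  set L := ⨅ i, g i
  have hfB : Tendsto (fun t => f t + B t) atBot (𝓝 L) := by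
    refine hgl.congr' ?_
    filter_upwards [eventually_le_atBot T₀] with t ht
    simp [hg, min_eq_left ht]
  have hfl : Tendsto f atBot (𝓝 L) := by
    have := hfB.sub hBlim
    simpa using this
  refine ⟨L, A' / ν * (1 + T) ^ ν, by positivity, hfl, fun t ht => ?_⟩
  have u1 : L ≤ f t + B t := by
    refine le_of_tendsto hfB ?_
    filter_upwards [eventually_le_atBot t] with s hst
    exact hmono (hst.trans ht : s ∈ Iic T₀) ht hst
  have u2 : f t - B t ≤ L := by
    have h3 : Tendsto (fun t => f t - B t) atBot (𝓝 L) := by simpa using hfl.sub hBlim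
    refine ge_of_tendsto h3 ?_
    filter_upwards [eventually_le_atBot t] with s hst
    exact hanti (hst.trans ht : s ∈ Iic T₀) ht hst
  have u3 : |L - f t| ≤ B t := abs_le.2 ⟨by linarith, by linarith⟩
  refine u3.trans ?_
  simp only [hB]
  rw [mul_assoc]
  refine mul_le_mul_of_nonneg_left ?_ (by positivity)
  have p1 : 0 < 1 + T - t := by linarith [hs t ht]
  rw [Real.rpow_neg p1.le, Real.rpow_neg (by positivity), ← div_eq_mul_inv,
      inv_eq_one_div, div_le_div_iff₀ (by positivity) (by positivity), one_mul,
      ← Real.mul_rpow (by positivity) (by positivity)]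
  exact Real.rpow_le_rpow (by positivity) (hs2 t ht) hν.le

lemma eNorm_le_sum {m : ℕ} (v : Fin m → ℝ) : eNorm v ≤ ∑ j, |v j| := by
  unfold eNorm
  rw [Real.sqrt_le_left (Finset.sum_nonneg fun _ _ => abs_nonneg _)]
  have := Finset.sum_sq_le_sq_sum_of_nonneg (s := Finset.univ) (f := fun j => |v j|)
    (fun _ _ => abs_nonneg _)
  simpa using this

/-- The general derivative of the energy expression with `ρ` fixed. -/
noncomputable def EE {m : ℕ} (R P A0 : ℝ) (H A2 : Fin m → Fin m → ℝ) (A1 W : Fin m → ℝ) : ℝ :=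
    P ^ 2 + (∑ j, ∑ k, H j k * W j * W k) / R ^ 2 + A0 * P ^ 2
      + (∑ j, A1 j * P * W j) / R + (∑ j, ∑ k, A2 j k * W j * W k) / R ^ 2

noncomputable def QD {m : ℕ} (R R' : ℝ) (H H' : Fin m → Fin m → ℝ) (W W' : Fin m → ℝ) : ℝ :=
  (∑ j, ∑ k, ((H' j k * W j + H j k * W' j) * W k + H j k * W j * W' k)) / R ^ 2
    - (∑ j, ∑ k, H j k * W j * W k) * (2 * R') / R ^ 3

noncomputable def ED {m : ℕ} (R R' P A0 A0' : ℝ) (H H' A2 A2' : Fin m → Fin m → ℝ)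
    (A1 A1' W W' : Fin m → ℝ) : ℝ :=
  QD R R' H H' W W' + A0' * P ^ 2
   + ((∑ j, (A1' j * P * W j + A1 j * P * W' j)) / R - (∑ j, A1 j * P * W j) * R' / R ^ 2)
   + QD R R' A2 A2' W W'

lemma QD_deriv {m : ℕ} (s : ℝ) (R : ℝ → ℝ) (R' : ℝ) (H : ℝ → Fin m → Fin m → ℝ) (H' : Fin m → Fin m → ℝ)
    (W : ℝ → Fin m → ℝ) (W' : Fin m → ℝ) (hR0 : R s ≠ 0)
    (hR : HasDerivAt R R' s) (hH : ∀ j k, HasDerivAt (fun x => H x j k) (H' j k) s)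
    (hW : ∀ j, HasDerivAt (fun x => W x j) (W' j) s) :
    HasDerivAt (fun x => (∑ j, ∑ k, H x j k * W x j * W x k) / R x ^ 2)
      (QD (R s) R' (H s) H' (W s) W') s := by
  have h1 : HasDerivAt (fun x => ∑ j, ∑ k, H x j k * W x j * W x k)
      (∑ j, ∑ k, ((H' j k * W s j + H s j k * W' j) * W s k + H s j k * W s j * W' k)) s :=
    HasDerivAt.fun_sum fun j _ => HasDerivAt.fun_sum fun k _ => ((hH j k).mul (hW j)).mul (hW k)
  refine (h1.div (hR.fun_pow 2) (pow_ne_zero 2 hR0)).congr_deriv ?_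
  unfold QD
  field_simp
  push_cast
  ring

lemma ED_deriv {m : ℕ} (s : ℝ) (R : ℝ → ℝ) (R' P : ℝ) (A0 : ℝ → ℝ) (A0' : ℝ)
    (H : ℝ → Fin m → Fin m → ℝ) (H' : Fin m → Fin m → ℝ)
    (A2 : ℝ → Fin m → Fin m → ℝ) (A2' : Fin m → Fin m → ℝ)
    (A1 : ℝ → Fin m → ℝ) (A1' : Fin m → ℝ)
    (W : ℝ → Fin m → ℝ) (W' : Fin m → ℝ) (hR0 : R s ≠ 0)
    (hR : HasDerivAt R R' s) (hA0 : HasDerivAt A0 A0' s)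
    (hH : ∀ j k, HasDerivAt (fun x => H x j k) (H' j k) s)
    (hA2 : ∀ j k, HasDerivAt (fun x => A2 x j k) (A2' j k) s)
    (hA1 : ∀ j, HasDerivAt (fun x => A1 x j) (A1' j) s)
    (hW : ∀ j, HasDerivAt (fun x => W x j) (W' j) s) :
    HasDerivAt (fun x => EE (R x) P (A0 x) (H x) (A2 x) (A1 x) (W x))
      (ED (R s) R' P (A0 s) A0' (H s) H' (A2 s) A2' (A1 s) A1' (W s) W') s := by
  have h1 := QD_deriv s R R' H H' W W' hR0 hR hH hW
  have h2 := QD_deriv s R R' A2 A2' W W' hR0 hR hA2 hW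
  have h3 : HasDerivAt (fun x => ∑ j, A1 x j * P * W x j)
      (∑ j, (A1' j * P * W s j + A1 s j * P * W' j)) s :=
    HasDerivAt.fun_sum fun j _ => ((hA1 j).mul_const P).mul (hW j)
  refine ((((h1.const_add (P ^ 2)).add (hA0.mul_const (P ^ 2))).add (h3.div hR hR0)).add h2).congr_deriv ?_
  unfold ED
  field_simp

open Asymptotics

lemma QD_bigO {m : ℕ} (l : Filter ℝ) (r R' : ℝ → ℝ) (H H' : ℝ → Fin m → Fin m → ℝ)
    (W W' : ℝ → Fin m → ℝ) (d : ℝ) (hr : ∀ᶠ t in l, 0 < r t)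
    (hR' : R' =O[l] fun t => r t ^ (1 - d))
    (hH : ∀ j k, (fun t => H t j k) =O[l] fun _ => (1:ℝ))
    (hH' : ∀ j k, (fun t => H' t j k) =O[l] fun t => r t ^ (-d))
    (hW : ∀ j, (fun t => W t j) =O[l] fun _ => (1:ℝ))
    (hW' : ∀ j, (fun t => W' t j) =O[l] fun t => r t ^ (-d)) :
    (fun t => QD (r t) (R' t) (H t) (H' t) (W t) (W' t)) =O[l] fun t => r t ^ (-2 - d) := by
  have e2 : (fun t => (r t ^ 2)⁻¹) =O[l] fun t => r t ^ (-2 : ℝ) := by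
    refine EventuallyEq.isBigO ?_
    filter_upwards [hr] with t ht
    rw [Real.rpow_neg ht.le]; norm_cast
  have e3 : (fun t => (r t ^ 3)⁻¹) =O[l] fun t => r t ^ (-3 : ℝ) := by
    refine EventuallyEq.isBigO ?_
    filter_upwards [hr] with t ht
    rw [Real.rpow_neg ht.le]; norm_cast
  have s1 : (fun t => ∑ j, ∑ k, ((H' t j k * W t j + H t j k * W' t j) * W t k + H t j k * W t j * W' t k))
      =O[l] fun t => r t ^ (-d) := by
    refine IsBigO.fun_sum fun j _ => IsBigO.fun_sum fun k _ => ?_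
    refine IsBigO.add ?_ ?_
    · refine ((IsBigO.add (g := fun t => r t ^ (-d)) ?_ ?_).mul (hW k)).congr_right (by simp)
      · exact ((hH' j k).mul (hW j)).congr_right (by simp)
      · exact ((hH j k).mul (hW' j)).congr_right (by simp)
    · exact (((hH j k).mul (hW j)).mul (hW' k)).congr_right (by simp)
  have s2 : (fun t => ∑ j, ∑ k, H t j k * W t j * W t k) =O[l] fun _ => (1:ℝ) := by
    refine IsBigO.fun_sum fun j _ => IsBigO.fun_sum fun k _ => ?_
    exact (((hH j k).mul (hW j)).mul (hW k)).congr_right (by simp)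
  unfold QD
  simp only [div_eq_mul_inv]
  refine IsBigO.sub ?_ ?_
  · refine (s1.mul e2).trans (EventuallyEq.isBigO ?_)
    filter_upwards [hr] with t ht
    rw [← Real.rpow_add ht]; ring_nf
  · refine ((s2.mul (hR'.const_mul_left 2)).mul e3).trans (EventuallyEq.isBigO ?_)
    filter_upwards [hr] with t ht
    rw [one_mul, ← Real.rpow_add ht]; ring_nf

lemma ED_bigO {m : ℕ} (l : Filter ℝ) (μ : ℝ) (hμ : 0 < μ) (hμ1 : μ < 1)
    (r R' P A0 A0' : ℝ → ℝ) (H H' A2 A2' : ℝ → Fin m → Fin m → ℝ)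
    (A1 A1' W W' : ℝ → Fin m → ℝ) (d : ℝ) (hr : ∀ᶠ t in l, 1 < r t)
    (hR' : R' =O[l] fun t => r t ^ (1 - d))
    (hP : P =O[l] fun _ => (1:ℝ))
    (hA0' : A0' =O[l] fun t => r t ^ (-1 - μ - d))
    (hH : ∀ j k, (fun t => H t j k) =O[l] fun _ => (1:ℝ))
    (hH' : ∀ j k, (fun t => H' t j k) =O[l] fun t => r t ^ (-d))
    (hA2 : ∀ j k, (fun t => A2 t j k) =O[l] fun _ => (1:ℝ))
    (hA2' : ∀ j k, (fun t => A2' t j k) =O[l] fun t => r t ^ (-d))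
    (hA1 : ∀ j, (fun t => A1 t j) =O[l] fun t => r t ^ (-μ))
    (hA1' : ∀ j, (fun t => A1' t j) =O[l] fun t => r t ^ (-μ - d))
    (hW : ∀ j, (fun t => W t j) =O[l] fun _ => (1:ℝ))
    (hW' : ∀ j, (fun t => W' t j) =O[l] fun t => r t ^ (-d)) :
    (fun t => ED (r t) (R' t) (P t) (A0 t) (A0' t) (H t) (H' t) (A2 t) (A2' t)
      (A1 t) (A1' t) (W t) (W' t)) =O[l] fun t => r t ^ (-1 - μ - d) := by
  have hr0 : ∀ᶠ t in l, 0 < r t := hr.mono fun t ht => by linarith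
  have w : (fun t => r t ^ (-2 - d)) =O[l] fun t => r t ^ (-1 - μ - d) := by
    refine IsBigO.of_bound 1 ?_
    filter_upwards [hr] with t ht
    have h0 : 0 < r t := by linarith
    rw [Real.norm_of_nonneg (by positivity), Real.norm_of_nonneg (by positivity), one_mul]
    exact Real.rpow_le_rpow_of_exponent_le ht.le (by linarith)
  have e1 : (fun t => (r t)⁻¹) =O[l] fun t => r t ^ (-1 : ℝ) := by
    refine EventuallyEq.isBigO ?_
    filter_upwards [hr0] with t ht
    rw [Real.rpow_neg ht.le]; norm_num
  have e2 : (fun t => (r t ^ 2)⁻¹) =O[l] fun t => r t ^ (-2 : ℝ) := by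
    refine EventuallyEq.isBigO ?_
    filter_upwards [hr0] with t ht
    rw [Real.rpow_neg ht.le]; norm_cast
  have s1 : (fun t => ∑ j, (A1' t j * P t * W t j + A1 t j * P t * W' t j))
      =O[l] fun t => r t ^ (-μ - d) := by
    refine IsBigO.fun_sum fun j _ => IsBigO.add ?_ ?_
    · exact (((hA1' j).mul hP).mul (hW j)).congr_right (by simp)
    · refine (((hA1 j).mul hP).mul (hW' j)).trans (EventuallyEq.isBigO ?_)
      filter_upwards [hr0] with t ht
      rw [mul_one, ← Real.rpow_add ht]; ring_nf
  have s2 : (fun t => ∑ j, A1 t j * P t * W t j) =O[l] fun t => r t ^ (-μ) := by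
    refine IsBigO.fun_sum fun j _ => ?_
    exact (((hA1 j).mul hP).mul (hW j)).congr_right (by simp)
  unfold ED
  refine IsBigO.add (IsBigO.add (IsBigO.add ?_ ?_) ?_) ?_
  · exact (QD_bigO l r R' H H' W W' d hr0 hR' hH hH' hW hW').trans w
  · exact (hA0'.mul (hP.pow 2)).congr_right (by simp)
  · simp only [div_eq_mul_inv]
    refine IsBigO.sub ?_ ?_
    · refine (s1.mul e1).trans (EventuallyEq.isBigO ?_)
      filter_upwards [hr0] with t ht
      rw [← Real.rpow_add ht]; ring_nf
    · refine ((s2.mul hR').mul e2).trans (EventuallyEq.isBigO ?_)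
      filter_upwards [hr0] with t ht
      rw [← Real.rpow_add ht, ← Real.rpow_add ht]; ring_nf
  · exact (QD_bigO l r R' A2 A2' W W' d hr0 hR' hA2 hA2' hW hW').trans w

lemma energy_eq {m : ℕ} (hM : (Fin m → ℝ) → Matrix (Fin m) (Fin m) ℝ)
    (a0 : ℝ → (Fin m → ℝ) → ℝ) (a1 : ℝ → (Fin m → ℝ) → Fin m → ℝ)
    (a2 : ℝ → (Fin m → ℝ) → Matrix (Fin m) (Fin m) ℝ) (r θ ρ ω) :
    energy hM a0 a1 a2 r θ ρ ω = EE r ρ (a0 r θ) (hM θ) (a2 r θ) (a1 r θ) ω := rfl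

lemma line_deriv {m : ℕ} (f : (Fin m → ℝ) → ℝ) (x v : Fin m → ℝ) (hf : DifferentiableAt ℝ f x) :
    HasDerivAt (fun s : ℝ => f (x + s • v)) (fderiv ℝ f x v) 0 :=
  hf.hasFDerivAt.hasLineDerivAt v

section Slices
variable {m : ℕ} {μ : ℝ} {U : Set (Fin m → ℝ)}

lemma slice_diff (hU : IsOpen U) (f : ℝ → (Fin m → ℝ) → ℝ)
    (hf : ContDiffOn ℝ (⊤ : ℕ∞) (fun z : ℝ × (Fin m → ℝ) => f z.1 z.2) (Ioi (1:ℝ) ×ˢ U))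
    (r : ℝ) (hr : 1 < r) (θ : Fin m → ℝ) (hθ : θ ∈ U) :
    DifferentiableAt ℝ (fun s => f s θ) r ∧ DifferentiableAt ℝ (f r) θ := by
  have h : DifferentiableAt ℝ (fun z : ℝ × (Fin m → ℝ) => f z.1 z.2) (r, θ) :=
    (hf.contDiffAt ((isOpen_Ioi.prod hU).mem_nhds (mk_mem_prod (mem_Ioi.2 hr) hθ))).differentiableAt (by simp)
  constructor
  · exact DifferentiableAt.comp (f := fun s : ℝ => (s, θ)) r h (by fun_prop)
  · exact DifferentiableAt.comp (f := fun s : Fin m → ℝ => (r, s)) θ h (by fun_prop)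

variable (hU : IsOpen U) (c : Coeffs m μ U)
  (r : ℝ) (hr : 1 < r) (θ : Fin m → ℝ) (hθ : θ ∈ U) (ρ : ℝ) (ω : Fin m → ℝ)

include hU hr hθ in
lemma pdR_eq_s8 : pdR c.p r θ ρ ω = ED r 1 ρ (c.a0 r θ) (deriv (fun s => c.a0 s θ) r)
    (c.hM θ) (fun _ _ => 0) (c.a2 r θ) (fun j k => deriv (fun s => c.a2 s θ j k) r)
    (c.a1 r θ) (fun j => deriv (fun s => c.a1 s θ j) r) ω (fun _ => 0) := by
  refine HasDerivAt.deriv (f := fun s => c.p s θ ρ ω) ?_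
  exact ED_deriv r (fun s => s) 1 ρ (fun s => c.a0 s θ) _ (fun _ => c.hM θ) _ (fun s => c.a2 s θ) _
    (fun s => c.a1 s θ) _ (fun _ => ω) _ (by simp; linarith) (hasDerivAt_id r)
    (slice_diff hU _ c.a0_smooth r hr θ hθ).1.hasDerivAt
    (fun j k => hasDerivAt_const _ _)
    (fun j k => (slice_diff hU (fun s x => c.a2 s x j k) (c.a2_smooth j k) r hr θ hθ).1.hasDerivAt)
    (fun j => (slice_diff hU (fun s x => c.a1 s x j) (c.a1_smooth j) r hr θ hθ).1.hasDerivAt)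
    (fun j => hasDerivAt_const _ _)

lemma hM_diff (hU : IsOpen U) (c : Coeffs m μ U) (θ : Fin m → ℝ) (hθ : θ ∈ U) (j k : Fin m) :
    DifferentiableAt ℝ (fun θ' => c.hM θ' j k) θ :=
  ((c.hM_smooth j k).contDiffAt (hU.mem_nhds hθ)).differentiableAt (by simp)

include hU hr hθ in
lemma pdTheta_eq (i : Fin m) : pdTheta c.p i r θ ρ ω =
    ED r 0 ρ (c.a0 r θ) (fderiv ℝ (c.a0 r) θ (Pi.single i 1))
    (c.hM θ) (fun j k => fderiv ℝ (fun θ' => c.hM θ' j k) θ (Pi.single i 1))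
    (c.a2 r θ) (fun j k => fderiv ℝ (fun θ' => c.a2 r θ' j k) θ (Pi.single i 1))
    (c.a1 r θ) (fun j => fderiv ℝ (fun θ' => c.a1 r θ' j) θ (Pi.single i 1)) ω (fun _ => 0) := by
  have d0 := (slice_diff hU _ c.a0_smooth r hr θ hθ).2
  have d1 := fun j => (slice_diff hU (fun s x => c.a1 s x j) (c.a1_smooth j) r hr θ hθ).2
  have d2 := fun j k => (slice_diff hU (fun s x => c.a2 s x j k) (c.a2_smooth j k) r hr θ hθ).2
  have dh := hM_diff hU c θ hθ
  have hd : DifferentiableAt ℝ (fun θ' => c.p r θ' ρ ω) θ := by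
    unfold Coeffs.p energy
    refine DifferentiableAt.add (DifferentiableAt.add (DifferentiableAt.add
      (DifferentiableAt.add (differentiableAt_const _) ?_) (d0.mul_const _)) ?_) ?_
    · simp only [div_eq_mul_inv]
      refine DifferentiableAt.mul_const ?_ _
      exact (DifferentiableAt.fun_sum fun j _ => DifferentiableAt.fun_sum fun k _ =>
        ((dh j k).mul_const _).mul_const _)
    · simp only [div_eq_mul_inv]
      refine DifferentiableAt.mul_const ?_ _
      exact (DifferentiableAt.fun_sum fun j _ => ((d1 j).mul_const _).mul_const _)
    · simp only [div_eq_mul_inv]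
      refine DifferentiableAt.mul_const ?_ _
      exact (DifferentiableAt.fun_sum fun j _ => DifferentiableAt.fun_sum fun k _ =>
        ((d2 j k).mul_const _).mul_const _)
  refine (line_deriv _ θ (Pi.single i 1) hd).unique ?_
  have := ED_deriv 0 (fun _ => r) 0 ρ (fun s => c.a0 r (θ + s • Pi.single i 1)) _
    (fun s => c.hM (θ + s • Pi.single i 1)) _ (fun s => c.a2 r (θ + s • Pi.single i 1)) _
    (fun s => c.a1 r (θ + s • Pi.single i 1)) _ (fun _ => ω) (fun _ => 0)
    (by simp; linarith) (hasDerivAt_const _ _)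
    (line_deriv _ θ (Pi.single i 1) d0)
    (fun j k => line_deriv _ θ (Pi.single i 1) (dh j k))
    (fun j k => line_deriv _ θ (Pi.single i 1) (d2 j k))
    (fun j => line_deriv _ θ (Pi.single i 1) (d1 j))
    (fun j => hasDerivAt_const _ _)
  simp only [zero_smul, add_zero] at this
  exact this

include hr in
lemma pdOmega_eq (i : Fin m) : pdOmega c.p i r θ ρ ω =
    ED r 0 ρ (c.a0 r θ) 0 (c.hM θ) (fun _ _ => 0) (c.a2 r θ) (fun _ _ => 0)
    (c.a1 r θ) (fun _ => 0) ω (fun j => (Pi.single i 1 : Fin m → ℝ) j) := by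
  have hd : DifferentiableAt ℝ (fun ω' => c.p r θ ρ ω') ω := by
    unfold Coeffs.p energy
    fun_prop
  refine (line_deriv _ ω (Pi.single i 1) hd).unique ?_
  have := ED_deriv 0 (fun _ => r) 0 ρ (fun s => c.a0 r θ) 0
    (fun s => c.hM θ) (fun _ _ => 0) (fun s => c.a2 r θ) (fun _ _ => 0)
    (fun s => c.a1 r θ) (fun _ => 0) (fun s => ω + s • Pi.single i 1)
      (fun j => (Pi.single i 1 : Fin m → ℝ) j)
    (by simp; linarith) (hasDerivAt_const _ _) (hasDerivAt_const _ _)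
    (fun j k => hasDerivAt_const _ _)
    (fun j k => hasDerivAt_const _ _)
    (fun j => hasDerivAt_const _ _)
    (fun j => by
      have := ((hasDerivAt_id (0:ℝ)).mul_const ((Pi.single i 1 : Fin m → ℝ) j)).const_add (ω j)
      simpa using this)
  simp only [zero_smul, add_zero] at this
  exact this

end Slices

lemma decay_bigO {m : ℕ} {f : ℝ → (Fin m → ℝ) → ℝ} {ν : ℝ} {K : Set (Fin m → ℝ)}
    (h : DecayOn f ν 1 K) (T₀ : ℝ) (r : ℝ → ℝ) (θ : ℝ → Fin m → ℝ)
    (hr : ∀ t ≤ T₀, 1 < r t) (hθ : ∀ t ≤ T₀, θ t ∈ K) (k : ℕ) (α : List (Fin m)) :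
    (fun t => (pderivR (m := m))^[k] (thetaDerivs α f) (r t) (θ t)) =O[𝓟 (Iic T₀)]
      fun t => r t ^ (-ν - (k : ℝ)) := by
  obtain ⟨C, _, hC⟩ := h k α
  refine isBigO_principal.2 ⟨C, fun t ht => ?_⟩
  have h0 : 0 < r t := by linarith [hr t ht]
  rw [Real.norm_eq_abs, Real.norm_of_nonneg (by positivity)]
  exact hC _ (hr t ht) _ (hθ t ht)

lemma cont_bigO {m : ℕ} {f : (Fin m → ℝ) → ℝ} {K : Set (Fin m → ℝ)} (hK : IsCompact K)
    (hf : ContinuousOn f K) (T₀ : ℝ) (θ : ℝ → Fin m → ℝ) (hθ : ∀ t ≤ T₀, θ t ∈ K) :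
    (fun t => f (θ t)) =O[𝓟 (Iic T₀)] fun _ => (1:ℝ) := by
  obtain ⟨C, hC⟩ := hK.exists_bound_of_continuousOn hf
  exact isBigO_principal.2 ⟨C, fun t ht => by simpa using hC _ (hθ t ht)⟩

lemma limit_bigO (T₀ ν c₀ : ℝ) (hν : 0 < ν) (hc₀ : 0 < c₀) (f f' r : ℝ → ℝ)
    (hf : ∀ t ≤ T₀, HasDerivAt f (f' t) t) (hr : ∀ t ≤ T₀, r t ≥ c₀ * (1 + |t|))
    (hb : f' =O[𝓟 (Iic T₀)] fun t => r t ^ (-(1 + ν))) :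
    ∃ L C : ℝ, 0 ≤ C ∧ Tendsto f atBot (𝓝 L) ∧ ∀ t ≤ T₀, |L - f t| ≤ C * (1 + |t|) ^ (-ν) := by
  have h1 : (fun t => r t ^ (-(1 + ν))) =O[𝓟 (Iic T₀)] fun t => (1 + |t|) ^ (-(1 + ν)) := by
    refine isBigO_principal.2 ⟨c₀ ^ (-(1 + ν)), fun t ht => ?_⟩
    have h2 := hr t ht
    have h3 : 0 < c₀ * (1 + |t|) := by positivity
    have h0 : 0 < r t := by linarith
    rw [Real.norm_of_nonneg (by positivity), Real.norm_of_nonneg (by positivity),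
      ← Real.mul_rpow hc₀.le (by positivity)]
    exact Real.rpow_le_rpow_of_nonpos h3 h2 (by linarith)
  obtain ⟨A, hA⟩ := isBigO_principal.1 (hb.trans h1)
  refine limit_aux T₀ A ν hν f f' hf fun t ht => ?_
  have := hA t ht
  rwa [Real.norm_eq_abs, Real.norm_of_nonneg (by positivity)] at this

/-- Existence of scattering data `θ₋, ρ⁻, ω⁻` with rates. -/
theorem statement_8 {m : ℕ} (hm : 1 ≤ m) {μ : ℝ} (hμ : μ ∈ Ioo (0:ℝ) 1)
    {U : Set (Fin m → ℝ)} (hU : IsOpen U) (c : Coeffs m μ U)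
    (K : Set (Fin m → ℝ)) (hK : IsCompact K) (hKU : K ⊆ U) (T₀ : ℝ)
    (c₀ C₀ : ℝ) (hc₀ : 0 < c₀) (hC₀ : 0 < C₀)
    (r : ℝ → ℝ) (θ : ℝ → Fin m → ℝ) (ρ : ℝ → ℝ) (ω : ℝ → Fin m → ℝ)
    (hsol : IsHamSolOn c.p r θ ρ ω (Iic T₀))
    (hdom : ∀ t ≤ T₀, r t ∈ Ioi (1:ℝ) ∧ θ t ∈ K ∧ r t ≥ c₀ * (1 + |t|) ∧
      |ρ t| ≤ C₀ ∧ eNorm (ω t) ≤ C₀) :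
    ∃ (θm : Fin m → ℝ) (ρm : ℝ) (ωm : Fin m → ℝ),
      Tendsto θ atBot (𝓝 θm) ∧ Tendsto ρ atBot (𝓝 ρm) ∧ Tendsto ω atBot (𝓝 ωm) ∧
      ∃ C > (0:ℝ), ∀ t ≤ T₀,
        eNorm (θm - θ t) ≤ C * (1 + |t|) ^ (-μ) ∧
        |ρm - ρ t| ≤ C * (1 + |t|) ^ (-(1:ℝ) - μ) ∧
        eNorm (ωm - ω t) ≤ C * (1 + |t|) ^ (-μ) := by
  have hr : ∀ t ≤ T₀, 1 < r t := fun t ht => (hdom t ht).1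
  have hθ : ∀ t ≤ T₀, θ t ∈ K := fun t ht => (hdom t ht).2.1
  have hrc : ∀ t ≤ T₀, r t ≥ c₀ * (1 + |t|) := fun t ht => (hdom t ht).2.2.1
  have hr' : ∀ᶠ t in 𝓟 (Iic T₀), 1 < r t := hr
  have hP : ρ =O[𝓟 (Iic T₀)] fun _ => (1:ℝ) :=
    isBigO_principal.2 ⟨C₀, fun t ht => by simpa using (hdom t ht).2.2.2.1⟩
  have hW : ∀ j, (fun t => ω t j) =O[𝓟 (Iic T₀)] fun _ => (1:ℝ) := fun j =>
    isBigO_principal.2 ⟨C₀, fun t ht => by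
      simpa using (abs_le_eNorm _ j).trans (hdom t ht).2.2.2.2⟩
  have hH : ∀ j k, (fun t => c.hM (θ t) j k) =O[𝓟 (Iic T₀)] fun _ => (1:ℝ) := fun j k =>
    cont_bigO hK ((c.hM_smooth j k).continuousOn.mono hKU) T₀ θ hθ
  have hH' : ∀ i j k, (fun t => fderiv ℝ (fun θ' => c.hM θ' j k) (θ t) (Pi.single i 1))
      =O[𝓟 (Iic T₀)] fun _ => (1:ℝ) := fun i j k => by
    refine cont_bigO (f := fun x => fderiv ℝ (fun θ' => c.hM θ' j k) x (Pi.single i 1)) hK ?_ T₀ θ hθ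
    have := ((c.hM_smooth j k).continuousOn_fderiv_of_isOpen hU (by simp)).mono hKU
    exact this.clm_apply continuousOn_const
  have b0 := decay_bigO (c.a0_decay K hK hKU) T₀ r θ hr hθ
  have b1 := fun j => decay_bigO (c.a1_decay K hK hKU j) T₀ r θ hr hθ
  have b2 := fun j k => decay_bigO (c.a2_decay K hK hKU j k) T₀ r θ hr hθ
  have hA1 : ∀ j, (fun t => c.a1 (r t) (θ t) j) =O[𝓟 (Iic T₀)] fun t => r t ^ (-μ) := fun j =>
    (b1 j 0 []).congr_right (by simp)
  have wk : ∀ a b : ℝ, a ≤ b → (fun t => r t ^ a) =O[𝓟 (Iic T₀)] fun t => r t ^ b := by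
    intro a b hab
    refine isBigO_principal.2 ⟨1, fun t ht => ?_⟩
    have h1 := hr t ht
    have h0 : 0 < r t := by linarith
    rw [Real.norm_of_nonneg (by positivity), Real.norm_of_nonneg (by positivity), one_mul]
    exact Real.rpow_le_rpow_of_exponent_le h1.le hab
  have hA2 : ∀ j k, (fun t => c.a2 (r t) (θ t) j k) =O[𝓟 (Iic T₀)] fun _ => (1:ℝ) := fun j k =>
    ((b2 j k 0 []).trans (wk _ 0 (by simpa using hμ.1.le))).congr_right (by simp)
  have zO : ∀ g : ℝ → ℝ, (fun _ : ℝ => (0:ℝ)) =O[𝓟 (Iic T₀)] g := fun g => isBigO_zero _ _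
  -- momentum ρ
  have oR : (fun t => -pdR c.p (r t) (θ t) (ρ t) (ω t)) =O[𝓟 (Iic T₀)]
      fun t => r t ^ (-(1 + (1 + μ))) := by
    refine IsBigO.neg_left ?_
    refine IsBigO.congr' (ED_bigO (𝓟 (Iic T₀)) μ hμ.1 hμ.2 r (fun _ => 1) ρ
      (fun t => c.a0 (r t) (θ t)) (fun t => deriv (fun s => c.a0 s (θ t)) (r t))
      (fun t => c.hM (θ t)) (fun _ _ _ => 0) (fun t => c.a2 (r t) (θ t))
      (fun t j k => deriv (fun s => c.a2 s (θ t) j k) (r t))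
      (fun t => c.a1 (r t) (θ t)) (fun t j => deriv (fun s => c.a1 s (θ t) j) (r t))
      ω (fun _ _ => 0) 1 hr' ?_ hP ?_ hH (fun _ _ => zO _) hA2 ?_ hA1 ?_ hW (fun _ => zO _)) ?_ ?_
    · exact (isBigO_refl _ _).congr_right (by simp)
    · exact (b0 1 []).congr_right (fun t => by push_cast; ring_nf)
    · exact fun j k => (b2 j k 1 []).trans (wk _ _ (by push_cast; linarith [hμ.1]))
    · exact fun j => (b1 j 1 []).congr_right (fun t => by push_cast; ring_nf)
    · intro t ht
      exact (pdR_eq_s8 hU c (r t) (hr t ht) (θ t) (hKU (hθ t ht)) (ρ t) (ω t)).symm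
    · exact Eventually.of_forall fun t => by ring_nf
  have oT : ∀ i, (fun t => -pdTheta c.p i (r t) (θ t) (ρ t) (ω t)) =O[𝓟 (Iic T₀)]
      fun t => r t ^ (-(1 + μ)) := by
    intro i
    refine IsBigO.neg_left ?_
    refine IsBigO.congr' (ED_bigO (𝓟 (Iic T₀)) μ hμ.1 hμ.2 r (fun _ => 0) ρ
      (fun t => c.a0 (r t) (θ t)) (fun t => fderiv ℝ (c.a0 (r t)) (θ t) (Pi.single i 1))
      (fun t => c.hM (θ t)) (fun t j k => fderiv ℝ (fun θ' => c.hM θ' j k) (θ t) (Pi.single i 1))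
      (fun t => c.a2 (r t) (θ t))
      (fun t j k => fderiv ℝ (fun θ' => c.a2 (r t) θ' j k) (θ t) (Pi.single i 1))
      (fun t => c.a1 (r t) (θ t))
      (fun t j => fderiv ℝ (fun θ' => c.a1 (r t) θ' j) (θ t) (Pi.single i 1))
      ω (fun _ _ => 0) 0 hr' (zO _) hP ?_ hH ?_ hA2 ?_ hA1 ?_ hW (fun _ => zO _)) ?_ ?_
    · exact (b0 0 [i]).congr_right (fun t => by push_cast; ring_nf)
    · exact fun j k => (hH' i j k).congr_right (by simp)
    · exact fun j k => (b2 j k 0 [i]).trans (wk _ _ (by push_cast; linarith [hμ.1]))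
    · exact fun j => (b1 j 0 [i]).congr_right (fun t => by push_cast; ring_nf)
    · intro t ht
      exact (pdTheta_eq hU c (r t) (hr t ht) (θ t) (hKU (hθ t ht)) (ρ t) (ω t) i).symm
    · exact Eventually.of_forall fun t => by ring_nf
  have oW : ∀ i, (fun t => pdOmega c.p i (r t) (θ t) (ρ t) (ω t)) =O[𝓟 (Iic T₀)]
      fun t => r t ^ (-(1 + μ)) := by
    intro i
    refine IsBigO.congr' (ED_bigO (𝓟 (Iic T₀)) μ hμ.1 hμ.2 r (fun _ => 0) ρ
      (fun t => c.a0 (r t) (θ t)) (fun t => 0)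
      (fun t => c.hM (θ t)) (fun t j k => 0)
      (fun t => c.a2 (r t) (θ t)) (fun t j k => 0)
      (fun t => c.a1 (r t) (θ t)) (fun t j => 0)
      ω (fun _ j => (Pi.single i 1 : Fin m → ℝ) j) 0 hr' (zO _) hP (zO _) hH (fun _ _ => zO _)
      hA2 (fun _ _ => zO _) hA1 (fun _ => zO _) hW ?_) ?_ ?_
    · exact fun j => (isBigO_const_const _ one_ne_zero _).congr_right (by simp)
    · intro t ht
      exact (pdOmega_eq c (r t) (hr t ht) (θ t) (ρ t) (ω t) i).symm
    · exact Eventually.of_forall fun t => by ring_nf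
  obtain ⟨ρm, Cρ, hCρ, hρl, hρb⟩ := limit_bigO T₀ (1 + μ) c₀ (by linarith [hμ.1]) hc₀ ρ _ r
    (fun t ht => (hsol t ht).2.2.1) hrc oR
  choose θm Cθ hCθ hθl hθb using fun i => limit_bigO T₀ μ c₀ hμ.1 hc₀ (fun s => θ s i) _ r
    (fun t ht => (hsol t ht).2.1 i) hrc (oW i)
  choose ωm Cω hCω hωl hωb using fun i => limit_bigO T₀ μ c₀ hμ.1 hc₀ (fun s => ω s i) _ r
    (fun t ht => (hsol t ht).2.2.2 i) hrc (oT i)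
  have sθ : 0 ≤ ∑ i, Cθ i := Finset.sum_nonneg fun i _ => hCθ i
  have sω : 0 ≤ ∑ i, Cω i := Finset.sum_nonneg fun i _ => hCω i
  refine ⟨θm, ρm, ωm, tendsto_pi_nhds.2 hθl, hρl, tendsto_pi_nhds.2 hωl,
    Cρ + ∑ i, Cθ i + ∑ i, Cω i + 1, by positivity, fun t ht => ⟨?_, ?_, ?_⟩⟩
  · refine (eNorm_le_sum _).trans ((Finset.sum_le_sum fun i _ => hθb i t ht).trans ?_)
    rw [← Finset.sum_mul]
    exact mul_le_mul_of_nonneg_right (by linarith) (by positivity)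
  · refine (hρb t ht).trans ?_
    rw [show -(1 + μ) = -(1:ℝ) - μ by ring]
    exact mul_le_mul_of_nonneg_right (by linarith) (by positivity)
  · refine (eNorm_le_sum _).trans ((Finset.sum_le_sum fun i _ => hωb i t ht).trans ?_)
    rw [← Finset.sum_mul]
    exact mul_le_mul_of_nonneg_right (by linarith) (by positivity)

end Scattering
end

section
/- (Deviation estimates along the trajectory tube.) Let K ⊆ U be compact, and let (r(t),θ(t),ρ(t),ω(t)), t ≤ 0, be a solution of the Hamiltonian system with θ(t) ∈ K, |ρ(t)| ≤ C₀, |ω(t)| ≤ C₀, and r(t) ≥ c₀|t+T₀| for all t ≤ 0, where T₀ < 0 and c₀, C₀ > 0. Then there exist δ' > 0 and C₁ > 0 such that for all δ₀ ∈ (0,δ'), all sufficiently negative T₀, all t ≤ 0, and all (r,θ,ρ,ω) ∈ (1,∞)×U×ℝ×ℝ^{n-1} with |r − r(t)| ≤ 10δ₀|t+T₀|, |θ − θ(t)| ≤ 2δ₀, |ρ − ρ(t)| ≤ 2δ₀ and |ω − ω(t)| ≤ 2δ₀, one has: |∂p/∂ρ(r,θ,ρ,ω) − ∂p/∂ρ(r(t),θ(t),ρ(t),ω(t))|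 ≤ 4δ₀ + C₁|t+T₀|^{-1-μ}; |∂p/∂ω(r,θ,ρ,ω) − ∂p/∂ω(r(t),θ(t),ρ(t),ω(t))| ≤ C₁|t+T₀|^{-1-μ}; |∂p/∂r(r,θ,ρ,ω) − ∂p/∂r(r(t),θ(t),ρ(t),ω(t))| ≤ C₁|t+T₀|^{-2-μ}; |∂p/∂θ(r,θ,ρ,ω) − ∂p/∂θ(r(t),θ(t),ρ(t),ω(t))| ≤ C₁|t+T₀|^{-1-μ}. -/
open Real Set Filter Topology

namespace Scattering

/-- Coordinate directions on phase space with their decay gain. -/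
def Dir {m : ℕ} (v : Phase m) (e : ℝ) : Prop :=
  (v = (1, 0, 0, 0) ∧ e = 1) ∨ (∃ j, v = (0, Pi.single j 1, 0, 0) ∧ e = 0) ∨
  (v = (0, 0, 1, 0) ∧ e = 0) ∨ (∃ j, v = (0, 0, 0, Pi.single j 1) ∧ e = 0)

def Good {m : ℕ} (S : Set (Phase m)) (ν : ℝ) (q : Phase m → ℝ) : Prop :=
  (∀ z ∈ S, DifferentiableAt ℝ q z) ∧ (∃ C > 0, ∀ z ∈ S, |q z| ≤ C * z.1 ^ (-ν)) ∧
  ∀ v e, Dir v e → ∃ C > 0, ∀ z ∈ S, |fderiv ℝ q z v| ≤ C * z.1 ^ (-ν - e)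

lemma Good.weaken {m : ℕ} {S : Set (Phase m)} (hS : ∀ z ∈ S, 1 < z.1) {ν ν' : ℝ} {q : Phase m → ℝ}
    (h : Good S ν q) (hν : ν' ≤ ν) : Good S ν' q := by
  obtain ⟨h1, ⟨C, hC, h2⟩, h3⟩ := h
  refine ⟨h1, ⟨C, hC, fun z hz => (h2 z hz).trans ?_⟩, fun v e hv => ?_⟩
  · gcongr
    exact (hS z hz).le
  · obtain ⟨C, hC, h4⟩ := h3 v e hv
    refine ⟨C, hC, fun z hz => (h4 z hz).trans ?_⟩
    gcongr
    exact (hS z hz).le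

lemma Good.add {m : ℕ} {S : Set (Phase m)} {ν : ℝ} {q q' : Phase m → ℝ}
    (h : Good S ν q) (h' : Good S ν q') : Good S ν (fun z => q z + q' z) := by
  obtain ⟨h1, ⟨C, hC, h2⟩, h3⟩ := h
  obtain ⟨h1', ⟨C', hC', h2'⟩, h3'⟩ := h'
  refine ⟨fun z hz => (h1 z hz).add (h1' z hz),
    ⟨C + C', by positivity, fun z hz => ?_⟩, fun v e hv => ?_⟩
  · have := abs_add_le (q z) (q' z)
    linarith [h2 z hz, h2' z hz]
  · obtain ⟨C, hC, h4⟩ := h3 v e hv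
    obtain ⟨C', hC', h4'⟩ := h3' v e hv
    refine ⟨C + C', by positivity, fun z hz => ?_⟩
    have e1 : fderiv ℝ (fun z => q z + q' z) z v = fderiv ℝ q z v + fderiv ℝ q' z v := by
      rw [fderiv_fun_add (h1 z hz) (h1' z hz)]; rfl
    rw [e1]
    have := abs_add_le (fderiv ℝ q z v) (fderiv ℝ q' z v)
    linarith [h4 z hz, h4' z hz]

lemma Good.mul {m : ℕ} {S : Set (Phase m)} (hS : ∀ z ∈ S, 1 < z.1) {ν ν' : ℝ} {q q' : Phase m → ℝ}
    (h : Good S ν q) (h' : Good S ν' q') : Good S (ν + ν') (fun z => q z * q' z) := by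
  obtain ⟨h1, ⟨C, hC, h2⟩, h3⟩ := h
  obtain ⟨h1', ⟨C', hC', h2'⟩, h3'⟩ := h'
  refine ⟨fun z hz => (h1 z hz).mul (h1' z hz),
    ⟨C * C', by positivity, fun z hz => ?_⟩, fun v e hv => ?_⟩
  · have hz0 : 0 < z.1 := by linarith [hS z hz]
    rw [abs_mul, neg_add, rpow_add hz0]
    calc _ ≤ (C * z.1 ^ (-ν)) * (C' * z.1 ^ (-ν')) := by
          gcongr
          · exact h2 z hz
          · exact h2' z hz
      _ = _ := by ring
  · obtain ⟨D, hD, h4⟩ := h3 v e hv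
    obtain ⟨D', hD', h4'⟩ := h3' v e hv
    refine ⟨C * D' + C' * D, by positivity, fun z hz => ?_⟩
    have hz0 : 0 < z.1 := by linarith [hS z hz]
    have e1 : fderiv ℝ (fun z => q z * q' z) z v = q z * fderiv ℝ q' z v + q' z * fderiv ℝ q z v := by
      rw [fderiv_fun_mul (h1 z hz) (h1' z hz)]; rfl
    have e2 : z.1 ^ (-(ν + ν') - e) = z.1 ^ (-ν) * z.1 ^ (-ν' - e) := by
      rw [← rpow_add hz0]; congr 1; ring
    have e3 : z.1 ^ (-(ν + ν') - e) = z.1 ^ (-ν') * z.1 ^ (-ν - e) := by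
      rw [← rpow_add hz0]; congr 1; ring
    rw [e1]
    refine (abs_add_le _ _).trans ?_
    rw [abs_mul, abs_mul, add_mul]
    refine add_le_add ?_ ?_
    · rw [e2]
      calc _ ≤ (C * z.1 ^ (-ν)) * (D' * z.1 ^ (-ν' - e)) := by
            gcongr
            · exact h2 z hz
            · exact h4' z hz
        _ = _ := by ring
    · rw [e3]
      calc _ ≤ (C' * z.1 ^ (-ν')) * (D * z.1 ^ (-ν - e)) := by
            gcongr
            · exact h2' z hz
            · exact h4 z hz
        _ = _ := by ring

lemma Good.zero {m : ℕ} {S : Set (Phase m)} (hS : ∀ z ∈ S, 1 < z.1) (ν : ℝ) :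
    Good S ν (fun _ => 0) := by
  refine ⟨fun z _ => differentiableAt_const _, ⟨1, one_pos, fun z hz => ?_⟩,
    fun v e _ => ⟨1, one_pos, fun z hz => ?_⟩⟩
  · have hz0 : 0 < z.1 := by linarith [hS z hz]
    simp; positivity
  · have hz0 : 0 < z.1 := by linarith [hS z hz]
    simp; positivity

lemma Good.sum {m : ℕ} {S : Set (Phase m)} (hS : ∀ z ∈ S, 1 < z.1) {ν : ℝ} {ι : Type}
    (s : Finset ι) (q : ι → Phase m → ℝ) (h : ∀ i, Good S ν (q i)) :
    Good S ν (fun z => ∑ i ∈ s, q i z) := by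
  classical
  induction s using Finset.induction_on with
  | empty => simpa using Good.zero hS ν
  | insert a s ha ih =>
    simp only [Finset.sum_insert ha]
    exact (h a).add ih

/-- the tube -/
def Box {m : ℕ} (K : Set (Fin m → ℝ)) (B : ℝ) : Set (Phase m) :=
  {z | 1 < z.1 ∧ z.2.1 ∈ K ∧ |z.2.2.1| ≤ B ∧ ∀ j, |z.2.2.2 j| ≤ B}

lemma good_of_linear {m : ℕ} {K : Set (Fin m → ℝ)} {B : ℝ} (hB : 0 < B) (L : Phase m →L[ℝ] ℝ)
    (hL : ∀ z ∈ Box K B, |L z| ≤ B) (h0 : L (1, 0, 0, 0) = 0) : Good (Box K B) 0 (fun z => L z) := by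
  refine ⟨fun z _ => L.differentiableAt, ⟨B, hB, fun z hz => by simpa using hL z hz⟩,
    fun v e hv => ⟨|L v| + 1, by positivity, fun z hz => ?_⟩⟩
  have hz0 : 0 < z.1 := by linarith [hz.1]
  rw [L.fderiv]
  rcases hv with ⟨rfl, rfl⟩ | ⟨j, rfl, rfl⟩ | ⟨rfl, rfl⟩ | ⟨j, rfl, rfl⟩
  · rw [h0]; simp; positivity
  all_goals simp

lemma good_rho {m : ℕ} {K : Set (Fin m → ℝ)} {B : ℝ} (hB : 0 < B) :
    Good (Box K B) 0 (fun z : Phase m => z.2.2.1) :=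
  good_of_linear hB ((ContinuousLinearMap.fst ℝ ℝ (Fin m → ℝ)).comp
    ((ContinuousLinearMap.snd ℝ (Fin m → ℝ) _).comp (ContinuousLinearMap.snd ℝ ℝ _)))
    (fun z hz => hz.2.2.1) (by simp)

lemma good_omega {m : ℕ} {K : Set (Fin m → ℝ)} {B : ℝ} (hB : 0 < B) (j : Fin m) :
    Good (Box K B) 0 (fun z : Phase m => z.2.2.2 j) :=
  good_of_linear hB ((ContinuousLinearMap.proj (R := ℝ) (φ := fun _ : Fin m => ℝ) j).comp
    ((ContinuousLinearMap.snd ℝ ℝ (Fin m → ℝ)).comp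
    ((ContinuousLinearMap.snd ℝ (Fin m → ℝ) _).comp (ContinuousLinearMap.snd ℝ ℝ _))))
    (fun z hz => hz.2.2.2 j) (by simp)

lemma good_coeff {m : ℕ} {K U : Set (Fin m → ℝ)} {B : ℝ} (hU : IsOpen U) (hKU : K ⊆ U)
    {ν : ℝ} (f : ℝ → (Fin m → ℝ) → ℝ)
    (hf : ContDiffOn ℝ (⊤ : ℕ∞) (fun z : ℝ × (Fin m → ℝ) => f z.1 z.2) (Ioi (1:ℝ) ×ˢ U))
    (h0 : ∃ C > 0, ∀ r ∈ Ioi (1:ℝ), ∀ θ ∈ K, |f r θ| ≤ C * r ^ (-ν))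
    (h1 : ∃ C > 0, ∀ r ∈ Ioi (1:ℝ), ∀ θ ∈ K, |pderivR f r θ| ≤ C * r ^ (-ν - 1))
    (h2 : ∀ j, ∃ C > 0, ∀ r ∈ Ioi (1:ℝ), ∀ θ ∈ K, |pderivTheta j f r θ| ≤ C * r ^ (-ν)) :
    Good (Box K B) ν (fun z => f z.1 z.2.1) := by
  have hd : ∀ z ∈ Box K B, DifferentiableAt ℝ (fun z : ℝ × (Fin m → ℝ) => f z.1 z.2) (z.1, z.2.1) := by
    intro z hz
    refine (hf.differentiableOn (by simp)).differentiableAt ?_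
    exact (isOpen_Ioi.prod hU).mem_nhds ⟨hz.1, hKU hz.2.1⟩
  have hF : ∀ z ∈ Box K B, HasFDerivAt (fun z : Phase m => f z.1 z.2.1)
      ((fderiv ℝ (fun z : ℝ × (Fin m → ℝ) => f z.1 z.2) (z.1, z.2.1)).comp
        ((ContinuousLinearMap.fst ℝ ℝ _).prod ((ContinuousLinearMap.fst ℝ (Fin m → ℝ) _).comp
          (ContinuousLinearMap.snd ℝ ℝ _)))) z := by
    intro z hz
    have hL : HasFDerivAt (fun z : Phase m => (z.1, z.2.1))
        ((ContinuousLinearMap.fst ℝ ℝ _).prod ((ContinuousLinearMap.fst ℝ (Fin m → ℝ) _).comp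
          (ContinuousLinearMap.snd ℝ ℝ _))) z :=
      hasFDerivAt_fst.prodMk (hasFDerivAt_fst.comp z hasFDerivAt_snd)
    exact HasFDerivAt.comp (f := fun z : Phase m => (z.1, z.2.1)) z (hd z hz).hasFDerivAt hL
  refine ⟨fun z hz => (hF z hz).differentiableAt, ?_, fun v e hv => ?_⟩
  · obtain ⟨C, hC, h⟩ := h0
    exact ⟨C, hC, fun z hz => h _ hz.1 _ hz.2.1⟩
  rcases hv with ⟨rfl, rfl⟩ | ⟨j, rfl, rfl⟩ | ⟨rfl, rfl⟩ | ⟨j, rfl, rfl⟩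
  · obtain ⟨C, hC, h⟩ := h1
    refine ⟨C, hC, fun z hz => ?_⟩
    have e1 : pderivR f z.1 z.2.1 = fderiv ℝ (fun z : Phase m => f z.1 z.2.1) z (1,0,0,0) := by
      rw [(hF z hz).fderiv]
      have := HasFDerivAt.comp_hasDerivAt (f := fun s : ℝ => (s, z.2.1)) z.1 (hd z hz).hasFDerivAt
        ((hasDerivAt_id z.1).prodMk (hasDerivAt_const z.1 z.2.1))
      exact this.deriv
    rw [← e1]
    exact h _ hz.1 _ hz.2.1
  · obtain ⟨C, hC, h⟩ := h2 j
    refine ⟨C, hC, fun z hz => ?_⟩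
    have e1 : pderivTheta j f z.1 z.2.1
        = fderiv ℝ (fun z : Phase m => f z.1 z.2.1) z (0,Pi.single j 1,0,0) := by
      rw [(hF z hz).fderiv]
      have := HasFDerivAt.comp (f := fun s : Fin m → ℝ => (z.1, s)) z.2.1 (hd z hz).hasFDerivAt
        ((hasFDerivAt_const z.1 z.2.1).prodMk (hasFDerivAt_id z.2.1))
      have h5 : fderiv ℝ (f z.1) z.2.1 = _ := this.fderiv
      rw [pderivTheta, h5]
      rfl
    rw [← e1, sub_zero]
    exact h _ hz.1 _ hz.2.1
  all_goals
    refine ⟨1, one_pos, fun z hz => ?_⟩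
    have hz0 : 0 < z.1 := by linarith [hz.1]
    rw [(hF z hz).fderiv]
    simp
    rw [show ((0, 0) : ℝ × (Fin m → ℝ)) = 0 from rfl, map_zero, abs_zero]
    positivity

lemma good_decay {m : ℕ} {K U : Set (Fin m → ℝ)} {B : ℝ} (hU : IsOpen U) (hKU : K ⊆ U)
    {ν : ℝ} (f : ℝ → (Fin m → ℝ) → ℝ)
    (hf : ContDiffOn ℝ (⊤ : ℕ∞) (fun z : ℝ × (Fin m → ℝ) => f z.1 z.2) (Ioi (1:ℝ) ×ˢ U))
    (h : DecayOn f ν 1 K) : Good (Box K B) ν (fun z => f z.1 z.2.1) := by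
  refine good_coeff hU hKU f hf ?_ ?_ fun j => ?_
  · simpa [thetaDerivs] using h 0 []
  · simpa [thetaDerivs] using h 1 []
  · simpa [thetaDerivs] using h 0 [j]

lemma good_h {m : ℕ} {K U : Set (Fin m → ℝ)} {B : ℝ} (hU : IsOpen U) (hKU : K ⊆ U)
    (hK : IsCompact K) (f : (Fin m → ℝ) → ℝ) (hf : ContDiffOn ℝ (⊤ : ℕ∞) f U) :
    Good (Box K B) 0 (fun z => f z.2.1) := by
  refine good_coeff hU hKU (fun _ θ => f θ) ?_ ?_ ?_ fun j => ?_
  · exact hf.comp contDiffOn_snd (fun z hz => hz.2)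
  · obtain ⟨C, hC⟩ := hK.exists_bound_of_continuousOn (hf.continuousOn.mono hKU)
    refine ⟨|C| + 1, by positivity, fun r _ θ hθ => ?_⟩
    have := hC θ hθ
    rw [Real.norm_eq_abs] at this
    simp
    linarith [le_abs_self C]
  · refine ⟨1, one_pos, fun r hr θ _ => ?_⟩
    have hr0 : 0 < r := by linarith [hr.out]
    simp [pderivR]
    positivity
  · have hc : ContinuousOn (fun θ => fderiv ℝ f θ (Pi.single j 1)) K :=
      ((hf.continuousOn_fderiv_of_isOpen hU (by simp)).mono hKU).clm_apply continuousOn_const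
    obtain ⟨C, hC⟩ := hK.exists_bound_of_continuousOn hc
    refine ⟨|C| + 1, by positivity, fun r _ θ hθ => ?_⟩
    have := hC θ hθ
    rw [Real.norm_eq_abs] at this
    simp [pderivTheta]
    linarith [le_abs_self C]

lemma good_inv {m : ℕ} {K : Set (Fin m → ℝ)} {B : ℝ} :
    Good (Box K B) 1 (fun z : Phase m => z.1⁻¹) := by
  refine good_coeff (U := univ) isOpen_univ (subset_univ _) (fun r _ => r⁻¹) ?_
    ⟨1, one_pos, ?_⟩ ⟨1, one_pos, ?_⟩ fun j => ⟨1, one_pos, ?_⟩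
  · refine ContDiffOn.inv contDiffOn_fst fun z hz => ?_
    have : 1 < z.1 := hz.1
    positivity
  · intro r hr θ _
    have hr0 : 0 < r := by linarith [hr.out]
    rw [rpow_neg_one, abs_of_pos (by positivity)]; simp
  · intro r hr θ _
    have hr0 : 0 < r := by linarith [hr.out]
    simp only [pderivR, deriv_inv]
    rw [show (-1 - 1 : ℝ) = -((2:ℕ):ℝ) by norm_num, rpow_neg hr0.le, rpow_natCast, abs_neg,
      abs_of_pos (by positivity), one_mul]
  · intro r hr θ _
    have hr0 : 0 < r := by linarith [hr.out]
    simp [pderivTheta]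
    positivity

noncomputable def Coeffs.q {m : ℕ} {μ : ℝ} {U : Set (Fin m → ℝ)} (c : Coeffs m μ U) (z : Phase m) : ℝ :=
  (∑ j, ∑ k, c.hM z.2.1 j k * z.2.2.2 j * z.2.2.2 k) * (z.1⁻¹ * z.1⁻¹)
    + c.a0 z.1 z.2.1 * (z.2.2.1 * z.2.2.1)
    + (∑ j, c.a1 z.1 z.2.1 j * z.2.2.1 * z.2.2.2 j) * z.1⁻¹
    + (∑ j, ∑ k, c.a2 z.1 z.2.1 j k * z.2.2.2 j * z.2.2.2 k) * (z.1⁻¹ * z.1⁻¹)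

lemma good_q {m : ℕ} {μ : ℝ} (hμ : μ ∈ Ioo (0:ℝ) 1) {U : Set (Fin m → ℝ)} (hU : IsOpen U)
    (c : Coeffs m μ U) {K : Set (Fin m → ℝ)} (hK : IsCompact K) (hKU : K ⊆ U) {B : ℝ} (hB : 0 < B) :
    Good (Box K B) (1 + μ) c.q := by
  have hS : ∀ z ∈ Box K B, 1 < z.1 := fun z hz => hz.1
  obtain ⟨hμ0, hμ1⟩ := hμ
  have hr2 := (good_inv (K := K) (B := B)).mul hS good_inv
  unfold Coeffs.q
  refine Good.add (Good.add (Good.add ?_ ?_) ?_) ?_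
  · refine Good.weaken hS (Good.mul hS (ν := 0 + 0 + 0) (Good.sum hS _ _ fun j => Good.sum hS _ _ fun k => ?_) hr2) (by linarith)
    exact ((good_h hU hKU hK _ (c.hM_smooth j k)).mul hS (good_omega hB j)).mul hS (good_omega hB k)
  · refine Good.weaken hS (Good.mul hS (good_decay hU hKU _ c.a0_smooth (c.a0_decay K hK hKU))
      ((good_rho hB).mul hS (good_rho hB))) (by linarith)
  · refine Good.weaken hS (Good.mul hS (ν := μ + 0 + 0) (Good.sum hS _ _ fun j => ?_) good_inv) (by linarith)
    exact ((good_decay hU hKU _ (c.a1_smooth j) (c.a1_decay K hK hKU j)).mul hS (good_rho hB)).mul hS (good_omega hB j)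
  · refine Good.weaken hS (Good.mul hS (ν := μ + 0 + 0) (Good.sum hS _ _ fun j => Good.sum hS _ _ fun k => ?_) hr2) (by linarith)
    exact ((good_decay hU hKU _ (c.a2_smooth j k) (c.a2_decay K hK hKU j k)).mul hS (good_omega hB j)).mul hS (good_omega hB k)

lemma p_eq {m : ℕ} {μ : ℝ} {U : Set (Fin m → ℝ)} (c : Coeffs m μ U) (r : ℝ) (θ : Fin m → ℝ)
    (ρ : ℝ) (ω : Fin m → ℝ) : c.p r θ ρ ω = ρ ^ 2 + c.q (r, θ, ρ, ω) := by
  simp only [Coeffs.p, energy, Coeffs.q]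
  simp only [div_eq_mul_inv, pow_two, mul_inv]
  ring

section pd
variable {m : ℕ} {μ : ℝ} {U : Set (Fin m → ℝ)} (c : Coeffs m μ U) {r : ℝ} {θ : Fin m → ℝ}
    {ρ : ℝ} {ω : Fin m → ℝ}

lemma pdR_eq_s14 (h : DifferentiableAt ℝ c.q (r, θ, ρ, ω)) :
    pdR c.p r θ ρ ω = fderiv ℝ c.q (r, θ, ρ, ω) (1, 0, 0, 0) := by
  have := HasFDerivAt.comp_hasDerivAt (f := fun s : ℝ => ((s, θ, ρ, ω) : Phase m)) r h.hasFDerivAt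
    ((hasDerivAt_id r).prodMk (hasDerivAt_const r (θ, ρ, ω)))
  simp only [pdR, p_eq]
  exact (this.const_add (ρ ^ 2)).deriv

lemma pdRho_eq_s14 (h : DifferentiableAt ℝ c.q (r, θ, ρ, ω)) :
    pdRho c.p r θ ρ ω = 2 * ρ + fderiv ℝ c.q (r, θ, ρ, ω) (0, 0, 1, 0) := by
  have := HasFDerivAt.comp_hasDerivAt (f := fun s : ℝ => ((r, θ, s, ω) : Phase m)) ρ h.hasFDerivAt
    ((hasDerivAt_const ρ r).prodMk ((hasDerivAt_const ρ θ).prodMk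
      ((hasDerivAt_id ρ).prodMk (hasDerivAt_const ρ ω))))
  simp only [pdRho, p_eq]
  have h2 := ((hasDerivAt_pow 2 ρ).add this).deriv
  refine h2.trans ?_
  norm_num

lemma pdTheta_eq_s14 (j : Fin m) (h : DifferentiableAt ℝ c.q (r, θ, ρ, ω)) :
    pdTheta c.p j r θ ρ ω = fderiv ℝ c.q (r, θ, ρ, ω) (0, Pi.single j 1, 0, 0) := by
  have := HasFDerivAt.comp (f := fun s : Fin m → ℝ => ((r, s, ρ, ω) : Phase m)) θ h.hasFDerivAt
    ((hasFDerivAt_const r θ).prodMk ((hasFDerivAt_id θ).prodMk (hasFDerivAt_const (ρ, ω) θ)))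
  simp only [pdTheta, p_eq]
  have h2 := (this.const_add (ρ ^ 2)).fderiv
  simp only [Function.comp_def] at h2
  rw [h2]
  rfl

lemma pdOmega_eq_s14 (j : Fin m) (h : DifferentiableAt ℝ c.q (r, θ, ρ, ω)) :
    pdOmega c.p j r θ ρ ω = fderiv ℝ c.q (r, θ, ρ, ω) (0, 0, 0, Pi.single j 1) := by
  have := HasFDerivAt.comp (f := fun s : Fin m → ℝ => ((r, θ, ρ, s) : Phase m)) ω h.hasFDerivAt
    ((hasFDerivAt_const r ω).prodMk ((hasFDerivAt_const θ ω).prodMk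
      ((hasFDerivAt_const ρ ω).prodMk (hasFDerivAt_id ω))))
  simp only [pdOmega, p_eq]
  have h2 := (this.const_add (ρ ^ 2)).fderiv
  simp only [Function.comp_def] at h2
  rw [h2]
  rfl
end pd

lemma eNorm_le {m : ℕ} (v : Fin m → ℝ) (D : Fin m → ℝ) (h : ∀ j, |v j| ≤ D j) :
    eNorm v ≤ ∑ j, D j := by
  have h0 : ∀ j, 0 ≤ D j := fun j => (abs_nonneg _).trans (h j)
  refine Real.sqrt_le_iff.2 ⟨Finset.sum_nonneg fun j _ => h0 j, ?_⟩
  calc ∑ j, v j ^ 2 ≤ ∑ j, D j ^ 2 := Finset.sum_le_sum fun j _ => by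
        rw [← sq_abs]; gcongr; exact h j
    _ ≤ _ := Finset.sum_sq_le_sq_sum_of_nonneg fun j _ => h0 j

/-- Uniform difference bound from `Good`. -/
lemma Good.diff {m : ℕ} {S : Set (Phase m)} (hS : ∀ z ∈ S, 1 < z.1) {ν : ℝ} {q : Phase m → ℝ}
    (h : Good S ν q) {a : ℝ} (ha : 0 < a) {v : Phase m} {e : ℝ} (hv : Dir v e) (hνe : 0 ≤ ν + e) :
    ∃ C > 0, ∀ s > 0, ∀ z ∈ S, ∀ z' ∈ S, a * s ≤ z.1 → a * s ≤ z'.1 →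
      |fderiv ℝ q z v - fderiv ℝ q z' v| ≤ C * s ^ (-ν - e) := by
  obtain ⟨C, hC, h⟩ := h.2.2 v e hv
  refine ⟨2 * C * a ^ (-ν - e), by positivity, fun s hs z hz z' hz' h1 h2 => ?_⟩
  have key : ∀ z ∈ S, a * s ≤ z.1 → |fderiv ℝ q z v| ≤ C * (a ^ (-ν - e) * s ^ (-ν - e)) := by
    intro z hz h1
    rw [← mul_rpow ha.le hs.le]
    refine (h z hz).trans ?_
    gcongr C * ?_
    exact rpow_le_rpow_of_nonpos (by positivity) h1 (by linarith)
  have := abs_sub (fderiv ℝ q z v) (fderiv ℝ q z' v)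
  linarith [key z hz h1, key z' hz' h2]

/-- Deviation estimates along the trajectory tube. In the tube
`|r - r(t)| ≤ 10δ₀|t+T₀|`, `|θ - θ(t)| ≤ 2δ₀`, `|ρ - ρ(t)| ≤ 2δ₀`, `|ω - ω(t)| ≤ 2δ₀`
around a backward trajectory, the partial derivatives of `p` deviate from their values
along the trajectory by the stated amounts. -/
theorem statement_14 {m : ℕ} (hm : 1 ≤ m) {μ : ℝ} (hμ : μ ∈ Ioo (0:ℝ) 1)
    {U : Set (Fin m → ℝ)} (hU : IsOpen U) (c : Coeffs m μ U)
    (K : Set (Fin m → ℝ)) (hK : IsCompact K) (hKU : K ⊆ U)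
    (c₀ C₀ : ℝ) (hc₀ : 0 < c₀) (hC₀ : 0 < C₀) :
    ∃ δ' > (0:ℝ), ∃ C₁ > (0:ℝ), ∃ T₁ < (0:ℝ), ∀ T₀ ≤ T₁,
      ∀ (r : ℝ → ℝ) (θ : ℝ → Fin m → ℝ) (ρ : ℝ → ℝ) (ω : ℝ → Fin m → ℝ),
        IsHamSolOn c.p r θ ρ ω (Iic 0) →
        (∀ t ≤ (0:ℝ), r t ∈ Ioi (1:ℝ) ∧ θ t ∈ K ∧ |ρ t| ≤ C₀ ∧ eNorm (ω t) ≤ C₀ ∧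
          r t ≥ c₀ * |t + T₀|) →
        ∀ δ₀ ∈ Ioo (0:ℝ) δ', ∀ t ≤ (0:ℝ),
        ∀ (r' : ℝ) (θ' : Fin m → ℝ) (ρ' : ℝ) (ω' : Fin m → ℝ),
          r' ∈ Ioi (1:ℝ) → θ' ∈ U →
          |r' - r t| ≤ 10 * δ₀ * |t + T₀| → eNorm (θ' - θ t) ≤ 2 * δ₀ →
          |ρ' - ρ t| ≤ 2 * δ₀ → eNorm (ω' - ω t) ≤ 2 * δ₀ →
          |pdRho c.p r' θ' ρ' ω' - pdRho c.p (r t) (θ t) (ρ t) (ω t)|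
              ≤ 4 * δ₀ + C₁ * |t + T₀| ^ (-(1:ℝ) - μ) ∧
          eNorm (fun j => pdOmega c.p j r' θ' ρ' ω' - pdOmega c.p j (r t) (θ t) (ρ t) (ω t))
              ≤ C₁ * |t + T₀| ^ (-(1:ℝ) - μ) ∧
          |pdR c.p r' θ' ρ' ω' - pdR c.p (r t) (θ t) (ρ t) (ω t)|
              ≤ C₁ * |t + T₀| ^ (-(2:ℝ) - μ) ∧
          eNorm (fun j => pdTheta c.p j r' θ' ρ' ω' - pdTheta c.p j (r t) (θ t) (ρ t) (ω t))
              ≤ C₁ * |t + T₀| ^ (-(1:ℝ) - μ) := by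
  obtain ⟨ε, hε, hεU⟩ := hK.exists_cthickening_subset_open hU hKU
  set K' := Metric.cthickening ε K with hK'
  have hK'c : IsCompact K' := hK.cthickening
  have hB : 0 < C₀ + 2 := by linarith
  have hg := good_q hμ hU c hK'c hεU hB
  have hS : ∀ z ∈ Box K' (C₀ + 2), 1 < z.1 := fun z hz => hz.1
  have ha : 0 < c₀ / 2 := by linarith
  have hμ0 := hμ.1
  obtain ⟨CR, hCR, hR⟩ := hg.diff hS ha (Or.inl ⟨rfl, rfl⟩) (by linarith)
  obtain ⟨Cρ, hCρ, hρ⟩ := hg.diff hS ha (Or.inr (Or.inr (Or.inl ⟨rfl, rfl⟩))) (by linarith)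
  have hT := fun j => hg.diff hS ha (Or.inr (Or.inl ⟨j, rfl, rfl⟩)) (by linarith)
  have hO := fun j => hg.diff hS ha (Or.inr (Or.inr (Or.inr ⟨j, rfl, rfl⟩))) (by linarith)
  choose CT hCT hT using hT
  choose CO hCO hO using hO
  have sT : 0 ≤ ∑ j, CT j := Finset.sum_nonneg fun j _ => (hCT j).le
  have sO : 0 ≤ ∑ j, CO j := Finset.sum_nonneg fun j _ => (hCO j).le
  refine ⟨min (min 1 (ε / 2)) (c₀ / 20), by positivity, CR + Cρ + ∑ j, CT j + ∑ j, CO j,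
    by positivity, -1, by norm_num, ?_⟩
  intro T₀ hT₀ r θ ρ ω _ htraj δ₀ hδ₀ t ht r' θ' ρ' ω' hr' hθ' hrr hθθ hρρ hωω
  obtain ⟨hrt, hθt, hρt, hωt, hrc⟩ := htraj t ht
  obtain ⟨hδ0, hδ⟩ := hδ₀
  simp only [lt_min_iff] at hδ
  obtain ⟨⟨hδ1, hδε⟩, hδc⟩ := hδ
  have hs : 0 < |t + T₀| := abs_pos.2 (by linarith)
  set s := |t + T₀| with hsdef
  have hz : ((r t, θ t, ρ t, ω t) : Phase m) ∈ Box K' (C₀ + 2) :=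
    ⟨hrt, Metric.self_subset_cthickening K hθt, by simp only; linarith,
      fun j => by simp only; linarith [abs_le_eNorm (ω t) j]⟩
  have hz' : ((r', θ', ρ', ω') : Phase m) ∈ Box K' (C₀ + 2) := by
    refine ⟨hr', ?_, ?_, fun j => ?_⟩
    · refine Metric.mem_cthickening_of_dist_le θ' (θ t) ε K hθt ?_
      refine (dist_pi_le_iff hε.le).2 fun j => ?_
      have := abs_le_eNorm (θ' - θ t) j
      rw [Real.dist_eq]
      simp only [Pi.sub_apply] at this
      linarith
    · have := abs_sub_abs_le_abs_sub ρ' (ρ t)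
      simp only; linarith
    · have h1 := abs_sub_abs_le_abs_sub (ω' j) (ω t j)
      have h2 := abs_le_eNorm (ω' - ω t) j
      have h3 := abs_le_eNorm (ω t) j
      simp only [Pi.sub_apply] at h2
      simp only; linarith
  have hd := hg.1 _ hz
  have hd' := hg.1 _ hz'
  have b1 : c₀ / 2 * s ≤ r t := by nlinarith
  have b2 : c₀ / 2 * s ≤ r' := by
    have := (abs_le.1 hrr).1
    nlinarith
  have hR := hR s hs _ hz' _ hz b2 b1
  have hρ := hρ s hs _ hz' _ hz b2 b1
  have hT := fun j => hT j s hs _ hz' _ hz b2 b1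
  have hO := fun j => hO j s hs _ hz' _ hz b2 b1
  rw [show -(1 + μ) - 1 = -(2:ℝ) - μ by ring] at hR
  simp only [show -(1 + μ) - 0 = -(1:ℝ) - μ by ring] at hρ hT hO
  have p1 : 0 ≤ s ^ (-(1:ℝ) - μ) := by positivity
  have p2 : 0 ≤ s ^ (-(2:ℝ) - μ) := by positivity
  refine ⟨?_, ?_, ?_, ?_⟩
  · rw [pdRho_eq_s14 c hd, pdRho_eq_s14 c hd']
    have hb : Cρ * s ^ (-(1:ℝ) - μ) ≤ (CR + Cρ + ∑ j, CT j + ∑ j, CO j) * s ^ (-(1:ℝ) - μ) := by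
      gcongr; linarith
    rw [abs_le] at hρ hρρ ⊢
    constructor <;> linarith [hρ.1, hρ.2, hρρ.1, hρρ.2]
  · refine (eNorm_le _ (fun j => CO j * s ^ (-(1:ℝ) - μ)) fun j => ?_).trans ?_
    · rw [pdOmega_eq_s14 c j hd, pdOmega_eq_s14 c j hd']
      exact hO j
    · rw [← Finset.sum_mul]
      gcongr; linarith
  · rw [pdR_eq_s14 c hd, pdR_eq_s14 c hd']
    refine hR.trans ?_
    gcongr; linarith
  · refine (eNorm_le _ (fun j => CT j * s ^ (-(1:ℝ) - μ)) fun j => ?_).trans ?_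
    · rw [pdTheta_eq_s14 c j hd, pdTheta_eq_s14 c j hd']
      exact hT j
    · rw [← Finset.sum_mul]
      gcongr; linarith


end Scattering
end
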